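/- arXiv:math/0209301 — 2 statements merged into one kernel-verified Lean document; each statement's English description precedes it below -/
import Mathlib

section
/- Strongly non-degenerate coefficient functions form a Zariski open subset of the space of all coefficient functions ℂ^Δ. -/
noncomputable section

/-- The semigroup ring `ℂ[K]` of the lattice points `S = K ∩ M ⊆ ℤ^r` of a cone `K`. -/
abbrev SGA (r : ℕ) (S : AddSubmonoid (Fin r → ℤ)) : Type := AddMonoidAlgebra ℂ ↥S

/-- `S` is the set of lattice points of the rational polyhedral cone generated by the
finite set `gens`. -/
def IsConeSemigroup (r : ℕ) (S : AddSubmonoid (Fin r → ℤ))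
    (gens : Finset (Fin r → ℤ)) : Prop :=
  ∀ m : Fin r → ℤ, m ∈ S ↔ ∃ c : (Fin r → ℤ) → ℚ,
    (∀ g ∈ gens, 0 ≤ c g) ∧ ∀ i, (m i : ℚ) = ∑ g ∈ gens, c g * (g i : ℚ)

/-- The element `z_n = Σ_{m ∈ Δ} f(m) (m · n) [m]` of `ℂ[K]`. -/
def zEl {r : ℕ} {S : AddSubmonoid (Fin r → ℤ)} (Δfin : Finset ↥S)
    (f : ↥Δfin → ℂ) (n : Fin r → ℤ) : SGA r S :=
  ∑ m ∈ Δfin.attach,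
    (f m * ((∑ i, ((m : ↥S) : Fin r → ℤ) i * n i : ℤ) : ℂ)) •
      AddMonoidAlgebra.single ((m : ↥S)) (1 : ℂ)

/-- `I(n₀) = { m · n₀ : m ∈ Δ }`, the (finite) set of values of the auxiliary grading
`· n₀` on `Δ`. -/
def Igrades {r : ℕ} {S : AddSubmonoid (Fin r → ℤ)} (Δfin : Finset ↥S)
    (n₀ : Fin r → ℤ) : Finset ℤ :=
  Δfin.image fun m => ∑ i, m.val i * n₀ i

/-- The graded piece `z_{i,j}`, for `i ∈ {1,…,r}` and `j ∈ I(n₀)`: the `·n₀`-degree-`j`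
component of `z_i = Σ_{m∈Δ} f(m)(m·n_i)[m]`, namely
`z_{i,j} = Σ_{m∈Δ, m·n₀ = j} f(m)(m·n_i)[m]`. -/
def zGraded {r : ℕ} {S : AddSubmonoid (Fin r → ℤ)} (Δfin : Finset ↥S)
    (f : ↥Δfin → ℂ) (n₀ : Fin r → ℤ)
    (e : Fin r × ↥(Igrades Δfin n₀)) : SGA r S :=
  ∑ m ∈ Δfin.attach.filter
      (fun m => (∑ k, m.val.val k * n₀ k) = ((e.2 : ℤ))),
    (f m * ((m.val.val e.1 : ℤ) : ℂ)) •
      AddMonoidAlgebra.single ((m : ↥S)) (1 : ℂ)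

/-- The (total) Koszul differential for a finite family `z : ι → A` of elements of a
commutative ring `A`, on the model `Λ(⊕_ι ℂ e_i) ⊗ A ≅ (Finset ι → A)` of the Koszul
complex `Λ(⊕_i ⊕_{j∈I(n₀)} ℂ e_{i,j}) ⊗ ℂ[K]`, with signs determined by an injective
encoding `enc : ι → ℤ` of a linear order on `ι`:
`(d x)(s) = Σ_{e ∉ s} (−1)^{#{e' ∈ s : e' < e}} z_e · x(s ∪ {e})`. -/
def koszulD {A : Type*} [CommRing A] [Algebra ℂ A] {ι : Type*} [Fintype ι]
    [DecidableEq ι] (z : ι → A) (enc : ι → ℤ) :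
    (Finset ι → A) →ₗ[ℂ] (Finset ι → A) where
  toFun x := fun s => ∑ e ∈ Finset.univ \ s,
    ((-1 : A) ^ ((s.filter (fun e' => enc e' < enc e)).card)) * (z e * x (insert e s))
  map_add' x y := by
    funext s
    simp [mul_add, Finset.sum_add_distrib]
  map_smul' c x := by
    funext s
    simp [Finset.smul_sum, mul_smul_comm, smul_sub]

/-- The cohomology of an operator `D` (with `D ∘ D = 0`) on a module `V`:
`ker D / (im D ∩ ker D)`. -/
abbrev opCohomology {V : Type*} [AddCommGroup V] [Module ℂ V] (D : V →ₗ[ℂ] V) : Type _ :=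
  ↥(LinearMap.ker D) ⧸
    Submodule.comap (LinearMap.ker D).subtype (LinearMap.range D)

/-- `W(f; n₀)`: the cohomology of the Koszul complex
`Λ(⊕_i ⊕_{j∈I(n₀)} ℂ e_{i,j}) ⊗ ℂ[K]` with differential `d = Σ_{i,j} ι(e_{i,j}) z_{i,j}`. -/
abbrev Wcoh {r : ℕ} {S : AddSubmonoid (Fin r → ℤ)} (Δfin : Finset ↥S)
    (f : ↥Δfin → ℂ) (n₀ : Fin r → ℤ) : Type _ :=
  opCohomology (koszulD (zGraded Δfin f n₀)
    (fun e : Fin r × ↥(Igrades Δfin n₀) => (e.2 : ℤ) * r + (e.1 : ℤ)))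


/-- A coefficient function `f` is strongly non-degenerate if it is non-degenerate and,
for each `n₀ ∈ N`, the dimension of `W(f; n₀)` is minimal among all possible choices of
coefficient function. -/
def IsStronglyNonDeg {r : ℕ} {S : AddSubmonoid (Fin r → ℤ)} (Δfin : Finset ↥S)
    (f : ↥Δfin → ℂ) : Prop :=
  FiniteDimensional ℂ (SGA r S ⧸ Ideal.span (Set.range (zEl Δfin f))) ∧
  ∀ n₀ : Fin r → ℤ,
    FiniteDimensional ℂ (Wcoh Δfin f n₀) ∧
    ∀ g : ↥Δfin → ℂ, FiniteDimensional ℂ (Wcoh Δfin g n₀) →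
      Module.finrank ℂ (Wcoh Δfin f n₀) ≤ Module.finrank ℂ (Wcoh Δfin g n₀)

noncomputable section
section Koszul
variable {A : Type*} [CommRing A] {ι : Type*} [Fintype ι] [DecidableEq ι]

/-- number of elements of `s` before `e` -/
def kcnt (enc : ι → ℤ) (s : Finset ι) (e : ι) : ℕ := (s.filter (fun e' => enc e' < enc e)).card

/-- The Koszul differential as an `A`-linear map. -/
def kD (z : ι → A) (enc : ι → ℤ) : (Finset ι → A) →ₗ[A] (Finset ι → A) where
  toFun x := fun s => ∑ e ∈ Finset.univ \ s, ((-1 : A) ^ (kcnt enc s e)) * (z e * x (insert e s))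
  map_add' x y := by
    funext s
    simp [mul_add, Finset.sum_add_distrib]
  map_smul' c x := by
    funext s
    simp only [Pi.smul_apply, smul_eq_mul, RingHom.id_apply, Finset.mul_sum]
    exact Finset.sum_congr rfl fun e _ => by ring

lemma kD_apply (z : ι → A) (enc : ι → ℤ) (x : Finset ι → A) (s : Finset ι) :
    kD z enc x s = ∑ e ∈ Finset.univ \ s, ((-1 : A) ^ (kcnt enc s e)) * (z e * x (insert e s)) := rfl

lemma koszulD_eq_kD [Algebra ℂ A] (z : ι → A) (enc : ι → ℤ) (x : Finset ι → A) :
    koszulD z enc x = kD z enc x := rfl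

lemma kcnt_insert (enc : ι → ℤ) (s : Finset ι) (e e' : ι) (h : e ∉ s) :
    kcnt enc (insert e s) e' = kcnt enc s e' + if enc e < enc e' then 1 else 0 := by
  unfold kcnt
  rw [Finset.filter_insert]
  split_ifs with h1
  · rw [Finset.card_insert_of_notMem (by simp [h])]
  · simp

lemma kD_sq (z : ι → A) (enc : ι → ℤ) (henc : Function.Injective enc) (x : Finset ι → A) :
    kD z enc (kD z enc x) = 0 := by
  funext s
  simp only [kD_apply, Finset.mul_sum, Pi.zero_apply]
  rw [Finset.sum_sigma']
  refine Finset.sum_involution (fun p _ => ⟨p.2, p.1⟩) ?_ ?_ ?_ ?_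
  · rintro ⟨e, e'⟩ h
    simp only [Finset.mem_sigma, Finset.mem_sdiff, Finset.mem_univ, true_and, Finset.mem_insert,
      not_or] at h
    obtain ⟨h1, h2, h3⟩ := h
    simp only
    rw [kcnt_insert _ _ _ _ h1, kcnt_insert _ _ _ _ h3, Finset.insert_comm e e']
    have hne : enc e ≠ enc e' := fun h => h2 (henc h).symm
    rcases lt_or_gt_of_ne hne with h | h
    · rw [if_pos h, if_neg (not_lt.2 h.le)]; ring
    · rw [if_pos h, if_neg (not_lt.2 h.le)]; ring
  · rintro ⟨e, e'⟩ h _ heq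
    simp only [Finset.mem_sigma, Finset.mem_sdiff, Finset.mem_univ, true_and, Finset.mem_insert,
      not_or] at h
    simp only [Sigma.mk.injEq] at heq
    exact h.2.1 heq.1
  · rintro ⟨e, e'⟩ h
    simp only [Finset.mem_sigma, Finset.mem_sdiff, Finset.mem_univ, true_and, Finset.mem_insert,
      not_or] at h ⊢
    exact ⟨h.2.2, fun h' => h.2.1 h'.symm, h.1⟩
  · rintro ⟨e, e'⟩ h
    rfl

/-- wedge with `e` -/
def kE (enc : ι → ℤ) (e : ι) (x : Finset ι → A) : Finset ι → A := fun s =>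
  if e ∈ s then (-1 : A) ^ (kcnt enc (s.erase e) e) * x (s.erase e) else 0

lemma neg_one_pow_sq (n : ℕ) : (-1 : A) ^ n * (-1 : A) ^ n = 1 := by
  rw [← mul_pow]; simp

lemma kD_kE (z : ι → A) (enc : ι → ℤ) (henc : Function.Injective enc) (e : ι) (x : Finset ι → A) :
    kD z enc (kE enc e x) + kE enc e (kD z enc x) = z e • x := by
  funext s
  simp only [Pi.add_apply, Pi.smul_apply, smul_eq_mul, kD_apply]
  by_cases hes : e ∈ s
  · obtain ⟨t, het, rfl⟩ : ∃ t, e ∉ t ∧ s = insert e t :=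
      ⟨s.erase e, by simp, (Finset.insert_erase hes).symm⟩
    have h1 : kE enc e (kD z enc x) (insert e t) =
        (-1 : A) ^ (kcnt enc t e) * kD z enc x t := by
      simp [kE, Finset.erase_insert het]
    have hun : Finset.univ \ t = insert e (Finset.univ \ insert e t) := by
      ext a; simp only [Finset.mem_sdiff, Finset.mem_univ, true_and, Finset.mem_insert]
      by_cases ha : a = e
      · simp [ha, het]
      · simp [ha]
    rw [h1, kD_apply, hun, Finset.sum_insert (by simp), mul_add, ← add_assoc, add_right_comm,
      ← mul_assoc, neg_one_pow_sq, one_mul, Finset.mul_sum, ← Finset.sum_add_distrib]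
    rw [Finset.sum_eq_zero, zero_add]
    intro a ha
    simp only [Finset.mem_sdiff, Finset.mem_univ, true_and, Finset.mem_insert, not_or] at ha
    have hne : enc e ≠ enc a := fun h => ha.1 (henc h).symm
    have h2 : (insert a (insert e t)).erase e = insert a t := by
      rw [Finset.insert_comm, Finset.erase_insert]
      simp only [Finset.mem_insert, not_or]; exact ⟨fun h => ha.1 h.symm, het⟩
    have h3 : kE enc e x (insert a (insert e t)) =
        (-1 : A) ^ (kcnt enc (insert a t) e) * x (insert a t) := by
      simp only [kE, h2]; simp
    rw [h3, kcnt_insert _ _ _ _ het, kcnt_insert _ _ _ _ ha.2]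
    rcases lt_or_gt_of_ne hne with h | h
    · rw [if_pos h, if_neg (not_lt.2 h.le)]; ring
    · rw [if_pos h, if_neg (not_lt.2 h.le)]; ring
  · have h1 : kE enc e (kD z enc x) s = 0 := by simp [kE, hes]
    rw [h1, add_zero, Finset.sum_eq_single e]
    · simp only [kE, Finset.mem_insert_self, if_true, Finset.erase_insert hes]
      have := neg_one_pow_sq (A := A) (kcnt enc s e)
      linear_combination (z e * x s) * this
    · intro a ha hae
      simp [kE, hes, Ne.symm hae]
    · intro h; simp [hes] at h

lemma kE_zero (enc : ι → ℤ) (e : ι) : kE enc e (0 : Finset ι → A) = 0 := by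
  funext s; simp [kE]

/-- The ideal generated by `z` kills cohomology. -/
lemma ideal_smul_mem_range (z : ι → A) (enc : ι → ℤ) (henc : Function.Injective enc)
    (a : A) (ha : a ∈ Ideal.span (Set.range z)) (y : Finset ι → A) (hy : kD z enc y = 0) :
    a • y ∈ LinearMap.range (kD z enc) := by
  induction ha using Submodule.span_induction with
  | mem a h =>
    obtain ⟨e, rfl⟩ := h
    refine ⟨kE enc e y, ?_⟩
    have := kD_kE z enc henc e y
    rwa [hy, kE_zero, add_zero] at this
  | zero => simp
  | add a b _ _ ha hb => rw [add_smul]; exact Submodule.add_mem _ ha hb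
  | smul c a _ ha => rw [smul_assoc]; exact Submodule.smul_mem _ _ ha

end Koszul
end

noncomputable section
section LinAlg

/-- Contracting homotopy for a filtered free complex which is exact after truncation. -/
lemma exists_homotopy {R V κ : Type*} [CommRing R] [AddCommGroup V] [Module R V]
    (b : Module.Basis κ R V) (level : κ → ℕ) (N : ℕ) (hN : ∀ k, level k < N)
    (d T : V →ₗ[R] V) (hdd : ∀ x, d (d x) = 0) (hTT : ∀ x, T (T x) = T x)
    (hdT : ∀ x, d (T x) = T (d x))
    (hlev : ∀ k, d (b k) ∈ Submodule.span R (b '' {k' | level k' < level k}))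
    (hex : ∀ x, d x = 0 → T x ∈ LinearMap.range d) :
    ∃ h : V →ₗ[R] V, ∀ x, d (h x) + h (d x) = T x := by
  have key : ∀ n, ∃ h : V →ₗ[R] V, (∀ x, T (h x) = h x) ∧
      ∀ k, level k < n → d (h (b k)) + h (d (b k)) = T (b k) := by
    intro n
    induction n with
    | zero => exact ⟨0, by simp, by simp⟩
    | succ n ih =>
      obtain ⟨h, hT, hh⟩ := ih
      have hspan : ∀ x ∈ Submodule.span R (b '' {k' | level k' < n}),
          d (h x) + h (d x) = T x := by
        have : Set.EqOn (d ∘ₗ h + h ∘ₗ d) T (Submodule.span R (b '' {k' | level k' < n})) := by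
          apply LinearMap.eqOn_span
          rintro _ ⟨k, hk, rfl⟩
          exact hh k hk
        exact fun x hx => this hx
      have hy : ∀ k, ∃ y, level k = n → d y = T (b k) - h (d (b k)) := by
        intro k
        by_cases hk : level k = n
        · have h1 : d (T (b k) - h (d (b k))) = 0 := by
            have h2 := hspan (d (b k)) (by rw [← hk]; exact hlev k)
            rw [hdd, map_zero, add_zero] at h2
            rw [map_sub, h2, hdT, sub_self]
          obtain ⟨y, hy⟩ := hex _ h1
          refine ⟨y, fun _ => ?_⟩
          rw [hy, map_sub, hTT, hT]
        · exact ⟨0, fun h => absurd h hk⟩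
      choose y hy using hy
      let h' : V →ₗ[R] V := b.constr R (fun k => if level k < n then h (b k) else
        if level k = n then T (y k) else 0)
      have h'b : ∀ k, h' (b k) = if level k < n then h (b k) else
        if level k = n then T (y k) else 0 := fun k => b.constr_basis R _ k
      have heq : ∀ x ∈ Submodule.span R (b '' {k' | level k' < n}), h' x = h x := by
        have : Set.EqOn h' h (Submodule.span R (b '' {k' | level k' < n})) := by
          apply LinearMap.eqOn_span
          rintro _ ⟨k, hk, rfl⟩
          rw [h'b, if_pos (show level k < n from hk)]
        exact fun x hx => this hx
      refine ⟨h', ?_, ?_⟩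
      · have : T ∘ₗ h' = h' := by
          apply b.ext
          intro k
          rw [LinearMap.comp_apply, h'b]
          split_ifs
          · exact hT _
          · exact hTT _
          · simp
        exact fun x => LinearMap.congr_fun this x
      · intro k hk
        have hdb : d (b k) ∈ Submodule.span R (b '' {k' | level k' < n}) := by
          refine Submodule.span_mono (Set.image_mono ?_) (hlev k)
          intro k' hk'
          simp only [Set.mem_ofPred_eq] at hk' ⊢
          omega
        rw [heq _ hdb, h'b]
        by_cases hk1 : level k < n
        · rw [if_pos hk1]; exact hh k hk1
        · have hk2 : level k = n := by omega
          rw [if_neg hk1, if_pos hk2, hdT, hy k hk2, map_sub, hTT, hT]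
          abel
  obtain ⟨h, -, hh⟩ := key N
  refine ⟨h, ?_⟩
  have : d ∘ₗ h + h ∘ₗ d = T := b.ext fun k => hh k (hN k)
  exact fun x => LinearMap.congr_fun this x

lemma finrank_opCohomology {V : Type*} [AddCommGroup V] [Module ℂ V] (d q : V →ₗ[ℂ] V)
    (hdd : ∀ x, d (d x) = 0) (hqq : ∀ x, q (q x) = q x) (hdq : ∀ x, d (q x) = q (d x))
    [FiniteDimensional ℂ (LinearMap.range q)]
    (hex : ∀ x, d x = 0 → x - q x ∈ LinearMap.range d) :
    FiniteDimensional ℂ (opCohomology d) ∧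
    Module.finrank ℂ (opCohomology d) + 2 * Module.finrank ℂ (LinearMap.range (d ∘ₗ q)) =
      Module.finrank ℂ (LinearMap.range q) := by
  set E := LinearMap.range q with hE
  let D : E →ₗ[ℂ] V := d.domRestrict E
  have hqE : ∀ x ∈ E, q x = x := by rintro _ ⟨y, rfl⟩; exact hqq y
  have hD : LinearMap.range D = LinearMap.range (d ∘ₗ q) := by
    ext x
    constructor
    · rintro ⟨⟨_, y, rfl⟩, rfl⟩; exact ⟨y, rfl⟩
    · rintro ⟨y, rfl⟩; exact ⟨⟨q y, y, rfl⟩, rfl⟩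
  let i : LinearMap.ker D →ₗ[ℂ] V := E.subtype ∘ₗ (LinearMap.ker D).subtype
  have hi : Function.Injective i := by
    intro a b h; exact Subtype.ext (Subtype.ext h)
  let j : LinearMap.ker D →ₗ[ℂ] LinearMap.ker d := i.codRestrict _ (fun x => by
    have := x.2; exact this)
  let φ : LinearMap.ker D →ₗ[ℂ] opCohomology d := (Submodule.mkQ _) ∘ₗ j
  have hsurj : Function.Surjective φ := by
    intro c
    obtain ⟨⟨x, hx⟩, rfl⟩ := Submodule.Quotient.mk_surjective _ c
    have hx' : d x = 0 := hx
    refine ⟨⟨⟨q x, x, rfl⟩, ?_⟩, ?_⟩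
    · change d (q x) = 0
      rw [hdq, hx', map_zero]
    · apply (Submodule.Quotient.eq _).2
      change q x - x ∈ LinearMap.range d
      rw [← neg_sub]
      exact Submodule.neg_mem _ (hex x hx')
  have hker : (LinearMap.ker φ).map i = LinearMap.range D := by
    ext x
    constructor
    · rintro ⟨y, hy, rfl⟩
      have h1 : i y ∈ LinearMap.range d := by
        have : j y ∈ Submodule.comap (LinearMap.ker d).subtype (LinearMap.range d) :=
          (Submodule.Quotient.mk_eq_zero _).1 hy
        exact this
      obtain ⟨w, hw⟩ := h1
      refine ⟨⟨q w, w, rfl⟩, ?_⟩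
      change d (q w) = _
      rw [hdq, hw]
      exact hqE _ y.1.2
    · rintro ⟨⟨_, y, rfl⟩, rfl⟩
      refine ⟨⟨⟨d (q y), d y, (hdq y).symm⟩, hdd _⟩, ?_, rfl⟩
      apply (Submodule.Quotient.mk_eq_zero _).2
      exact ⟨q y, rfl⟩
  have hfd : FiniteDimensional ℂ (opCohomology d) := Module.Finite.of_surjective φ hsurj
  refine ⟨hfd, ?_⟩
  have e1 := LinearMap.finrank_range_add_finrank_ker D
  have e2 := LinearMap.finrank_range_add_finrank_ker φ
  rw [LinearMap.range_eq_top.2 hsurj, finrank_top] at e2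
  have e3 := (Submodule.equivMapOfInjective i hi (LinearMap.ker φ)).finrank_eq
  rw [hker] at e3
  rw [← hD]
  omega

lemma rank_semicont {Δ V : Type*} [Fintype Δ] [DecidableEq Δ] [AddCommGroup V] [Module ℂ V]
    (Φ : (Δ → ℂ) →ₗ[ℂ] (V →ₗ[ℂ] V)) (q : V →ₗ[ℂ] V)
    [FiniteDimensional ℂ (LinearMap.range q)] (f₀ : Δ → ℂ) :
    ∃ p : MvPolynomial Δ ℂ, MvPolynomial.eval f₀ p ≠ 0 ∧ ∀ f, MvPolynomial.eval f p ≠ 0 →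
      Module.finrank ℂ (LinearMap.range (Φ f₀ ∘ₗ q)) ≤
      Module.finrank ℂ (LinearMap.range (Φ f ∘ₗ q)) := by
  have hfd : ∀ f, FiniteDimensional ℂ (LinearMap.range (Φ f ∘ₗ q)) := by
    intro f
    rw [LinearMap.range_comp]; infer_instance
  have := hfd f₀
  set W := LinearMap.range (Φ f₀ ∘ₗ q) with hW
  let b := Module.finBasis ℂ W
  set n := Module.finrank ℂ W with hn
  have hx : ∀ i, ∃ x, Φ f₀ (q x) = b i := fun i => (b i).2
  choose x hx using hx
  obtain ⟨g, hg⟩ := LinearMap.exists_leftInverse_of_injective W.subtype W.ker_subtype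
  let ψ : V →ₗ[ℂ] (Fin n → ℂ) := b.equivFun.toLinearMap ∘ₗ g
  let M : (Δ → ℂ) → Matrix (Fin n) (Fin n) ℂ := fun f => Matrix.of fun i => ψ (Φ f (q (x i)))
  let P : Matrix (Fin n) (Fin n) (MvPolynomial Δ ℂ) := fun i j =>
    ∑ m, MvPolynomial.X m * MvPolynomial.C (M (Pi.single m 1) i j)
  have hPM : ∀ f, (MvPolynomial.eval f).mapMatrix P = M f := by
    intro f
    ext i j
    change MvPolynomial.eval f (∑ m, MvPolynomial.X m * MvPolynomial.C (M (Pi.single m 1) i j)) = _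
    simp only [map_sum, map_mul, MvPolynomial.eval_X, MvPolynomial.eval_C]
    have : f = ∑ m, f m • (Pi.single m (1:ℂ) : Δ → ℂ) := pi_eq_sum_univ' f |>.trans (by simp [Pi.single])
    conv_rhs => rw [this]
    simp [M, map_sum, LinearMap.sum_apply, Finset.sum_apply]
  have hdet : ∀ f, MvPolynomial.eval f P.det = (M f).det := by
    intro f; rw [RingHom.map_det, hPM]
  refine ⟨P.det, ?_, ?_⟩
  · rw [hdet]
    have : M f₀ = 1 := by
      ext i j
      have h2 : g (b i : V) = b i := LinearMap.congr_fun hg (b i)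
      simp [M, ψ, hx, h2, Matrix.one_apply, Finsupp.single_apply]
    rw [this]; simp
  · intro f hf
    rw [hdet] at hf
    have := hfd f
    have li : LinearIndependent ℂ (M f).row :=
      Matrix.linearIndependent_rows_of_det_ne_zero hf
    have li2 : LinearIndependent ℂ (fun i => Φ f (q (x i))) := by
      apply LinearIndependent.of_comp ψ
      exact li
    let v : Fin n → LinearMap.range (Φ f ∘ₗ q) := fun i => ⟨Φ f (q (x i)), x i, rfl⟩
    have li3 : LinearIndependent ℂ v := LinearIndependent.of_comp (Submodule.subtype _) li2
    simpa using li3.fintype_card_le_finrank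

end LinAlg
end

noncomputable section
section Graded
open AddMonoidAlgebra
variable {R M : Type*} [CommRing R] [AddCommMonoid M] (deg : M →+ ℤ)

open Classical in
/-- projection onto the part with degrees in `P` -/
def gproj (P : Set ℤ) : AddMonoidAlgebra R M →ₗ[R] AddMonoidAlgebra R M where
  toFun x := .ofCoeff (x.coeff.filter (fun m => deg m ∈ P))
  map_add' x y := by ext m; simp [Finsupp.filter_apply]
  map_smul' c x := by ext m; simp [Finsupp.filter_apply]

open Classical in
lemma gproj_coeff (P : Set ℤ) (x : AddMonoidAlgebra R M) (m : M) :
    (gproj deg P x).coeff m = if deg m ∈ P then x.coeff m else 0 := by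
  simp [gproj, Finsupp.filter_apply]

open Classical in
lemma gproj_single (P : Set ℤ) (m : M) (c : R) :
    gproj deg P (single m c) = if deg m ∈ P then single m c else 0 := by
  ext m'
  rw [gproj_coeff]
  by_cases h : m = m'
  · subst h; split_ifs <;> simp
  · split_ifs <;> simp [Finsupp.single_apply, h]

lemma gproj_idem (P : Set ℤ) (x : AddMonoidAlgebra R M) :
    gproj deg P (gproj deg P x) = gproj deg P x := by
  ext m; simp only [gproj_coeff]; split_ifs <;> rfl

lemma eq_sum_single (a : AddMonoidAlgebra R M) :
    a = ∑ m ∈ a.coeff.support, single m (a.coeff m) := by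
  classical
  ext m
  simp [Finsupp.single_apply]

lemma gproj_single_mul (P : Set ℤ) (m : M) (c : R) (y : AddMonoidAlgebra R M) :
    gproj deg P (single m c * y) = single m c * gproj deg {k | k + deg m ∈ P} y := by
  classical
  rw [eq_sum_single y]
  simp only [Finset.mul_sum, map_sum, single_mul_single, gproj_single, map_add]
  refine Finset.sum_congr rfl fun a _ => ?_
  by_cases h : deg m + deg a ∈ P
  · rw [if_pos h, if_pos (by simpa [add_comm] using h), single_mul_single]
  · rw [if_neg h, if_neg (by simpa [add_comm] using h), mul_zero]

/-- homogeneous of degree `δ` -/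
def GHomog (δ : ℤ) (a : AddMonoidAlgebra R M) : Prop := ∀ m, a.coeff m ≠ 0 → deg m = δ

lemma gproj_mul {δ : ℤ} {a : AddMonoidAlgebra R M} (ha : GHomog deg δ a) (P : Set ℤ)
    (y : AddMonoidAlgebra R M) :
    gproj deg P (a * y) = a * gproj deg {k | k + δ ∈ P} y := by
  rw [eq_sum_single a, Finset.sum_mul, Finset.sum_mul, map_sum]
  refine Finset.sum_congr rfl fun m hm => ?_
  rw [gproj_single_mul, ha m (by simpa using hm)]

variable {ι : Type*} [Fintype ι] [DecidableEq ι]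

/-- projection on the Koszul complex by weight -/
def gprojF (P : Set ℤ) :
    (Finset ι → AddMonoidAlgebra R M) →ₗ[R] (Finset ι → AddMonoidAlgebra R M) :=
  LinearMap.pi fun s => (gproj deg {k | k + (s.card : ℤ) ∈ P}) ∘ₗ LinearMap.proj s

lemma gprojF_apply (P : Set ℤ) (x : Finset ι → AddMonoidAlgebra R M) (s : Finset ι) :
    gprojF deg P x s = gproj deg {k | k + (s.card : ℤ) ∈ P} (x s) := rfl

lemma gprojF_idem (P : Set ℤ) (x : Finset ι → AddMonoidAlgebra R M) :
    gprojF deg P (gprojF deg P x) = gprojF deg P x := by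
  funext s; simp only [gprojF_apply, gproj_idem]

lemma gprojF_single_smul (P : Set ℤ) (m : M) (c : R) (y : Finset ι → AddMonoidAlgebra R M) :
    gprojF deg P (single m c • y) = single m c • gprojF deg {k | k + deg m ∈ P} y := by
  funext s
  simp only [gprojF_apply, Pi.smul_apply, smul_eq_mul, gproj_single_mul]
  have : {k : ℤ | k + (s.card : ℤ) ∈ {k | k + deg m ∈ P}} =
      {k | k + deg m ∈ {k | k + (s.card : ℤ) ∈ P}} := by
    ext k
    simp only [Set.mem_ofPred_eq]
    rw [add_right_comm]
  rw [this]

lemma gprojF_kD {z : ι → AddMonoidAlgebra R M} (hz : ∀ e, GHomog deg 1 (z e)) (enc : ι → ℤ)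
    (P : Set ℤ) (x : Finset ι → AddMonoidAlgebra R M) :
    kD z enc (gprojF deg P x) = gprojF deg P (kD z enc x) := by
  funext s
  simp only [gprojF_apply, kD_apply, map_sum]
  refine Finset.sum_congr rfl fun e he => ?_
  have hes : e ∉ s := by simpa using he
  have h1 : gproj deg {k | k + (s.card : ℤ) ∈ P} (z e * x (insert e s)) =
      z e * gproj deg {k | k + ((insert e s).card : ℤ) ∈ P} (x (insert e s)) := by
    rw [gproj_mul deg (hz e)]
    have : {k : ℤ | k + ((insert e s).card : ℤ) ∈ P} =
        {k | k + 1 ∈ {k | k + (s.card : ℤ) ∈ P}} := by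
      ext k
      simp only [Set.mem_ofPred_eq, Finset.card_insert_of_notMem hes]
      push_cast
      rw [add_assoc k 1, add_comm (1 : ℤ)]
    rw [this]
  rcases neg_one_pow_eq_or (AddMonoidAlgebra R M) (kcnt enc s e) with h | h
  · rw [h, one_mul, one_mul, h1]
  · rw [h, neg_one_mul, neg_one_mul, map_neg, h1]

/-- Truncated exactness over a Noetherian base. -/
lemma exists_trunc_exact [IsNoetherianRing (AddMonoidAlgebra R M)]
    {z : ι → AddMonoidAlgebra R M} (hz : ∀ e, GHomog deg 1 (z e)) (enc : ι → ℤ)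
    (henc : Function.Injective enc) (k₀ : ℤ)
    (hk : ∀ m, k₀ ≤ deg m → single m (1 : R) ∈ Ideal.span (Set.range z)) :
    ∃ w : ℤ, ∀ x, kD z enc x = 0 → gprojF deg (Set.Ici w) x ∈ LinearMap.range (kD z enc) := by
  classical
  obtain ⟨G, hG⟩ := IsNoetherian.noetherian (LinearMap.ker (kD z enc))
  let B : Set ℤ := ⋃ y ∈ G, ⋃ s : Finset ι,
    (fun m => deg m + (s.card : ℤ)) '' ((y s).coeff.support : Set M)
  have hB : B.Finite := by
    refine Set.Finite.biUnion G.finite_toSet fun y _ => ?_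
    exact Set.finite_iUnion fun s => (Finset.finite_toSet _).image _
  obtain ⟨v, hv⟩ := hB.bddAbove
  have hv' : ∀ y ∈ G, ∀ P : Set ℤ, (∀ k ∈ P, v < k) → gprojF deg P y = 0 := by
    intro y hy P hP
    funext s
    ext m
    rw [gprojF_apply, gproj_coeff]
    split_ifs with h
    · by_contra hne
      have h1 := hP _ h
      have h2 : deg m + (s.card : ℤ) ≤ v := hv (by
        simp only [B, Set.mem_iUnion]
        refine ⟨y, hy, s, m, ?_, rfl⟩
        simpa using hne)
      omega
    · rfl
  have key : ∀ y ∈ G, ∀ a : AddMonoidAlgebra R M,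
      gprojF deg (Set.Ici (v + k₀)) (a • y) ∈ LinearMap.range (kD z enc) := by
    intro y hy a
    have hy0 : kD z enc y = 0 := by
      have : y ∈ LinearMap.ker (kD z enc) := hG ▸ Submodule.subset_span hy
      exact this
    rw [eq_sum_single a, Finset.sum_smul, map_sum]
    refine Submodule.sum_mem _ fun m _ => ?_
    rw [gprojF_single_smul]
    by_cases hm : k₀ ≤ deg m
    · have h1 : single m (a.coeff m) ∈ Ideal.span (Set.range z) := by
        have := Ideal.mul_mem_left _ (single 0 (a.coeff m)) (hk m hm)
        rwa [single_mul_single, zero_add, mul_one] at this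
      refine ideal_smul_mem_range z enc henc _ h1 _ ?_
      rw [gprojF_kD deg hz, hy0, map_zero]
    · rw [hv' y hy, smul_zero]
      · exact Submodule.zero_mem _
      · intro k hk
        simp only [Set.mem_ofPred_eq, Set.mem_Ici] at hk
        omega
  refine ⟨v + k₀, fun x hx => ?_⟩
  have hx' : x ∈ Submodule.span (AddMonoidAlgebra R M) (G : Set (Finset ι → AddMonoidAlgebra R M)) := by
    rw [hG]; exact hx
  clear hx
  obtain ⟨c, rfl⟩ := Submodule.mem_span_finset'.1 hx'
  rw [map_sum]
  refine Submodule.sum_mem _ fun y _ => key y.1 y.2 _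

variable (R M ι) in
/-- basis of the Koszul complex -/
def kbasis : Module.Basis (Σ _ : Finset ι, M) R (Finset ι → AddMonoidAlgebra R M) :=
  Pi.basis (fun _ => AddMonoidAlgebra.basis M R)

lemma kbasis_repr (y : Finset ι → AddMonoidAlgebra R M) (k : Σ _ : Finset ι, M) :
    (kbasis R M ι).repr y k = (y k.1).coeff k.2 := by
  simp [kbasis, AddMonoidAlgebra.basis, Pi.basis_repr]

lemma kbasis_apply (k : Σ _ : Finset ι, M) :
    kbasis R M ι k = Pi.single k.1 (single k.2 1) := by
  rw [kbasis, Pi.basis_apply, AddMonoidAlgebra.basis_apply]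

lemma exists_khomotopy {z : ι → AddMonoidAlgebra R M} (hz : ∀ e, GHomog deg 1 (z e)) (enc : ι → ℤ)
    (henc : Function.Injective enc) (P : Set ℤ)
    (hex : ∀ x, kD z enc x = 0 → gprojF deg P x ∈ LinearMap.range (kD z enc)) :
    ∃ h : (Finset ι → AddMonoidAlgebra R M) →ₗ[R] (Finset ι → AddMonoidAlgebra R M),
      ∀ x, kD z enc (h x) + h (kD z enc x) = gprojF deg P x := by
  refine exists_homotopy (kbasis R M ι) (fun k => k.1.card) (Fintype.card ι + 1)
    (fun k => Nat.lt_succ_of_le (Finset.card_le_univ _)) ((kD z enc).restrictScalars R)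
    (gprojF deg P) (kD_sq z enc henc) (gprojF_idem deg P) (gprojF_kD deg hz enc P) ?_ hex
  rintro ⟨s, m⟩
  rw [Module.Basis.mem_span_image]
  rintro ⟨t, m'⟩ ht
  simp only [Finset.mem_coe, Finsupp.mem_support_iff, kbasis_repr, kbasis_apply] at ht
  simp only [Set.mem_ofPred_eq]
  by_contra hlt
  apply ht
  have : (kD z enc) (Pi.single s (single m (1:R))) t = 0 := by
    rw [kD_apply]
    refine Finset.sum_eq_zero fun e he => ?_
    have het : e ∉ t := by simpa using he
    have hne : insert e t ≠ s := by
      rintro rfl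
      rw [Finset.card_insert_of_notMem het] at hlt
      omega
    rw [Pi.single_eq_of_ne hne]; simp
  change ((kD z enc) (Pi.single s (single m (1:R))) t).coeff m' = 0
  rw [this]; rfl

/-- base change on the Koszul complex -/
lemma kD_map {k : Type*} [CommRing k] (ρ : R →+* k) (z : ι → AddMonoidAlgebra R M) (enc : ι → ℤ)
    (x : Finset ι → AddMonoidAlgebra R M) (s : Finset ι) :
    kD (fun e => mapRingHom M ρ (z e)) enc (fun t => mapRingHom M ρ (x t)) s =
      mapRingHom M ρ (kD z enc x s) := by
  simp only [kD_apply, map_sum, map_mul, map_pow, map_neg, map_one]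

lemma gproj_map {k : Type*} [CommRing k] (ρ : R →+* k) (P : Set ℤ) (x : AddMonoidAlgebra R M) :
    gproj deg P (mapRingHom M ρ x) = mapRingHom M ρ (gproj deg P x) := by
  ext m
  simp only [gproj_coeff, coeff_mapRingHom]
  split_ifs <;> simp

lemma trunc_exact_specialize {k : Type*} [CommRing k] (ρ : R →+* k) (hρ : Function.Surjective ρ)
    {z : ι → AddMonoidAlgebra R M} (hz : ∀ e, GHomog deg 1 (z e)) (enc : ι → ℤ)
    (henc : Function.Injective enc) (P : Set ℤ)
    (hex : ∀ x, kD z enc x = 0 → gprojF deg P x ∈ LinearMap.range (kD z enc))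
    (x : Finset ι → AddMonoidAlgebra k M) (hx : kD (fun e => mapRingHom M ρ (z e)) enc x = 0) :
    gprojF deg P x ∈ LinearMap.range (kD (fun e => mapRingHom M ρ (z e)) enc) := by
  obtain ⟨h, hh⟩ := exists_khomotopy deg hz enc henc P hex
  have hsurj : ∀ a : AddMonoidAlgebra k M, ∃ a' : AddMonoidAlgebra R M, mapRingHom M ρ a' = a :=
    AddMonoidAlgebra.map_surjective (ρ : R →+ k) hρ
  choose lift hlift using hsurj
  let x' : Finset ι → AddMonoidAlgebra R M := fun s => lift (x s)
  have hx' : (fun t => mapRingHom M ρ (x' t)) = x := funext fun s => hlift _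
  have hzero : ∀ y : Finset ι → AddMonoidAlgebra R M, (∀ s, mapRingHom M ρ (y s) = 0) →
      ∀ s, mapRingHom M ρ (h y s) = 0 := by
    intro y hy s
    have h1 : ∀ i, ρ ((kbasis R M ι).repr y i) = 0 := by
      intro i
      rw [kbasis_repr, ← coeff_mapRingHom, hy]; rfl
    rw [← (kbasis R M ι).linearCombination_repr y, Finsupp.linearCombination_apply,
      Finsupp.sum, map_sum, Finset.sum_apply, map_sum]
    refine Finset.sum_eq_zero fun i _ => ?_
    rw [map_smul, Pi.smul_apply]
    ext m
    rw [coeff_mapRingHom]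
    simp [h1]
  have hdx : ∀ s, mapRingHom M ρ (kD z enc x' s) = 0 := by
    intro s
    rw [← kD_map, hx', hx]; rfl
  refine ⟨fun t => mapRingHom M ρ (h x' t), ?_⟩
  funext s
  rw [kD_map, gprojF_apply, ← hx', gproj_map, ← gprojF_apply, ← hh]
  rw [Pi.add_apply, map_add, hzero _ hdx, add_zero]

end Graded
end

noncomputable section
section Family
open AddMonoidAlgebra
variable {M : Type*} [AddCommMonoid M] (deg : M →+ ℤ) {Δ : Type*} [Fintype Δ] (incl : Δ → M)

/-- universal family `∑ φ(m) a(m) [m]` -/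
def zfam {R : Type*} [CommRing R] (φ : Δ → R) (a : Δ → ℤ) : AddMonoidAlgebra R M :=
  ∑ m, single (incl m) (φ m * (a m : R))

lemma zfam_homog (hincl : ∀ m, deg (incl m) = 1) {R : Type*} [CommRing R] (φ : Δ → R)
    (a : Δ → ℤ) : GHomog deg 1 (zfam incl φ a) := by
  classical
  intro m hm
  by_contra hne
  apply hm
  rw [zfam, coeff_sum, Finsupp.finsetSum_apply]
  refine Finset.sum_eq_zero fun i _ => ?_
  rw [coeff_single, Finsupp.single_apply, if_neg]
  rintro rfl
  exact hne (hincl i)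

lemma zfam_map {R k : Type*} [CommRing R] [CommRing k] (ρ : R →+* k) (φ : Δ → R) (a : Δ → ℤ) :
    mapRingHom M ρ (zfam incl φ a) = zfam incl (fun m => ρ (φ m)) a := by
  simp [zfam, map_sum]

lemma zfam_comb {R : Type*} [CommRing R] (φ : Δ → R) {ι : Type*} [Fintype ι] (b : ι → Δ → ℤ)
    (a : Δ → ℤ) (c : ι → ℤ) (h : ∀ m, a m = ∑ e, c e * b e m) :
    zfam incl φ a ∈ Ideal.span (Set.range fun e => zfam incl φ (b e)) := by
  have : zfam incl φ a = ∑ e, single 0 (c e : R) * zfam incl φ (b e) := by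
    simp only [zfam, Finset.mul_sum, single_mul_single, zero_add]
    rw [Finset.sum_comm]
    refine Finset.sum_congr rfl fun m _ => ?_
    rw [h]
    push_cast
    rw [Finset.mul_sum]
    ext m'
    simp only [coeff_sum, coeff_single, ← Finsupp.single_finsetSum]
    congr 1
    congr 1
    exact Finset.sum_congr rfl fun e _ => by ring
  rw [this]
  exact Submodule.sum_mem _ fun e _ => Ideal.mul_mem_left _ _ (Ideal.subset_span ⟨e, rfl⟩)

lemma gproj_mem_span {R ν : Type*} [CommRing R] {z : ν → AddMonoidAlgebra R M}
    (hz : ∀ e, GHomog deg 1 (z e)) {x : AddMonoidAlgebra R M}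
    (hx : x ∈ Ideal.span (Set.range z)) :
    ∀ P : Set ℤ, gproj deg P x ∈ Ideal.span (Set.range z) := by
  induction hx using Submodule.span_induction with
  | mem a h =>
    obtain ⟨e, rfl⟩ := h
    intro P
    rw [← mul_one (z e), gproj_mul deg (hz e)]
    exact Ideal.mul_mem_right _ _ (Ideal.subset_span ⟨e, rfl⟩)
  | zero => intro P; simp
  | add a b _ _ ha hb => intro P; rw [map_add]; exact Submodule.add_mem _ (ha P) (hb P)
  | smul c a _ ha =>
    intro P
    rw [eq_sum_single c, smul_eq_mul, Finset.sum_mul, map_sum]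
    refine Submodule.sum_mem _ fun m _ => ?_
    rw [gproj_single_mul]
    exact Ideal.mul_mem_left _ _ (ha _)

lemma exists_degree_bound {ν : Type*} {z : ν → AddMonoidAlgebra ℂ M}
    (hz : ∀ e, GHomog deg 1 (z e))
    (hfd : FiniteDimensional ℂ (AddMonoidAlgebra ℂ M ⧸ Ideal.span (Set.range z))) :
    ∃ k₀ : ℤ, ∀ m, k₀ ≤ deg m → single m (1 : ℂ) ∈ Ideal.span (Set.range z) := by
  set J := Ideal.span (Set.range z) with hJ
  let K : Set ℤ := {k | ∃ m, deg m = k ∧ single m (1 : ℂ) ∉ J}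
  have hm : ∀ k : K, ∃ m, deg m = k ∧ single m (1 : ℂ) ∉ J := fun k => k.2
  choose μ hμ hμJ using hm
  have li : LinearIndependent ℂ (fun k : K => (Ideal.Quotient.mkₐ ℂ J) (single (μ k) (1 : ℂ))) := by
    rw [linearIndependent_iff']
    intro s g hs k hk
    have h1 : ∑ i ∈ s, g i • single (μ i) (1 : ℂ) ∈ J := by
      rw [← Ideal.Quotient.eq_zero_iff_mem, ← Ideal.Quotient.mkₐ_eq_mk ℂ, map_sum, ← hs]
      exact Finset.sum_congr rfl fun i _ => map_smul _ _ _
    have h2 := gproj_mem_span deg hz h1 {(k : ℤ)}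
    rw [map_sum, Finset.sum_eq_single k] at h2
    · rw [map_smul, gproj_single, if_pos (by simp [hμ])] at h2
      by_contra hg
      apply hμJ k
      have h3 := Ideal.mul_mem_left J (single 0 (g k)⁻¹) h2
      rw [smul_single, single_mul_single] at h3
      simpa [hg] using h3
    · intro b _ hb
      rw [map_smul, gproj_single, if_neg, smul_zero]
      rw [hμ]
      simpa [Subtype.ext_iff] using hb
    · intro h; exact absurd hk h
  have hfin : K.Finite := by
    have : Finite K := li.finite
    exact Set.toFinite K
  obtain ⟨v, hv⟩ := hfin.bddAbove
  refine ⟨v + 1, fun m h => ?_⟩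
  by_contra hne
  have : deg m ≤ v := hv ⟨m, rfl, hne⟩
  omega

open scoped Pointwise in
lemma nakayama_step [DecidableEq Δ] (hincl : ∀ m, deg (incl m) = 1) (k : ℤ)
    (hfin : {m | deg m = k}.Finite)
    {ν : Type*} (a : ν → Δ → ℤ) (f₀ : Δ → ℂ)
    (h0 : ∀ m, deg m = k → single m (1 : ℂ) ∈ Ideal.span (Set.range fun e => zfam incl f₀ (a e))) :
    ∃ h : MvPolynomial Δ ℂ, MvPolynomial.eval f₀ h ≠ 0 ∧ ∀ m, deg m = k →
      single m h ∈ Ideal.span (Set.range fun e =>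
        zfam incl (MvPolynomial.X : Δ → MvPolynomial Δ ℂ) (a e)) := by
  set ρ : MvPolynomial Δ ℂ →+* ℂ := MvPolynomial.eval f₀ with hρ
  set z := fun e => zfam incl (MvPolynomial.X : Δ → MvPolynomial Δ ℂ) (a e) with hz
  set J := Ideal.span (Set.range z) with hJ
  have hzh : ∀ e, GHomog deg 1 (z e) := fun e => zfam_homog deg incl hincl _ _
  have hρs : Function.Surjective ρ := fun c => ⟨MvPolynomial.C c, by simp [hρ]⟩
  have hsurj : Function.Surjective (mapRingHom M ρ) :=
    AddMonoidAlgebra.map_surjective (ρ : MvPolynomial Δ ℂ →+ ℂ) hρs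
  have hmap : Ideal.map (mapRingHom M ρ) J =
      Ideal.span (Set.range fun e => zfam incl f₀ (a e)) := by
    rw [hJ, Ideal.map_span, ← Set.range_comp]
    congr 2
    funext e
    simp [hz, zfam_map, hρ]
  let N' : Submodule (MvPolynomial Δ ℂ) (AddMonoidAlgebra (MvPolynomial Δ ℂ) M) :=
    Submodule.span _ ((fun m => single m 1) '' {m | deg m = k})
  have hN'fg : N'.FG := Submodule.fg_span (hfin.image _)
  have hle : N' ≤ J.restrictScalars (MvPolynomial Δ ℂ) ⊔ (RingHom.ker ρ) • N' := by
    refine Submodule.span_le.2 ?_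
    rintro _ ⟨m, hm, rfl⟩
    have h1 := h0 m hm
    rw [← hmap, Ideal.mem_map_iff_of_surjective _ hsurj] at h1
    obtain ⟨y, hy, hym⟩ := h1
    set y' := gproj deg {k} y with hy'
    have hy'J : y' ∈ J := gproj_mem_span deg hzh hy _
    have hy'm : mapRingHom M ρ y' = single m 1 := by
      rw [hy', ← gproj_map, hym, gproj_single, if_pos (by simpa using hm)]
    have hdecomp : single m (1 : MvPolynomial Δ ℂ) = y' + (single m 1 - y') := by abel
    have hrest : single m (1 : MvPolynomial Δ ℂ) - y' ∈ (RingHom.ker ρ) • N' := by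
      have hg : gproj deg {k} (single m (1 : MvPolynomial Δ ℂ) - y') = single m 1 - y' := by
        rw [map_sub, hy', gproj_idem, gproj_single, if_pos (by simpa using hm)]
      have hmz : mapRingHom M ρ (single m (1 : MvPolynomial Δ ℂ) - y') = 0 := by
        rw [map_sub, hy'm, mapRingHom_single, map_one, sub_self]
      generalize single m (1 : MvPolynomial Δ ℂ) - y' = w at hg hmz
      rw [eq_sum_single w]
      refine Submodule.sum_mem _ fun m' hm' => ?_
      have e1 : single m' (w.coeff m') = w.coeff m' • single m' (1 : MvPolynomial Δ ℂ) := by simp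
      rw [e1]
      refine Submodule.smul_mem_smul ?_ (Submodule.subset_span ⟨m', ?_, rfl⟩)
      · rw [RingHom.mem_ker, ← coeff_mapRingHom, hmz]; rfl
      · by_contra hne
        have : w.coeff m' = 0 := by
          rw [← hg, gproj_coeff, if_neg]
          simpa using hne
        simp [this] at hm'
    change single m (1 : MvPolynomial Δ ℂ) ∈ _
    rw [hdecomp]
    exact Submodule.add_mem_sup hy'J hrest
  obtain ⟨h, hh1, hh2⟩ :=
    Submodule.exists_sub_one_mem_and_smul_le_of_fg_of_le_sup hN'fg le_rfl hle
  refine ⟨h, ?_, ?_⟩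
  · rw [RingHom.mem_ker, map_sub, map_one, sub_eq_zero] at hh1
    rw [hh1]; exact one_ne_zero
  · intro m hm
    have h3 : h • single m (1 : MvPolynomial Δ ℂ) ∈ h • N' :=
      Submodule.smul_mem_pointwise_smul _ _ _ (Submodule.subset_span ⟨m, hm, rfl⟩)
    have h4 := hh2 h3
    simpa using h4

lemma span_propagate {R ν : Type*} [CommRing R] (z : ν → AddMonoidAlgebra R M) (k : ℤ)
    (hstep : ∀ m, k < deg m → ∃ m' m'', m = m' + m'' ∧ deg m'' = deg m - 1)
    (h : ∀ m, deg m = k → single m (1 : R) ∈ Ideal.span (Set.range z)) :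
    ∀ m, k ≤ deg m → single m (1 : R) ∈ Ideal.span (Set.range z) := by
  have key : ∀ n : ℕ, ∀ m, deg m = k + n → single m (1 : R) ∈ Ideal.span (Set.range z) := by
    intro n
    induction n with
    | zero => intro m hm; exact h m (by simpa using hm)
    | succ n ih =>
      intro m hm
      obtain ⟨m', m'', rfl, h2⟩ := hstep m (by rw [hm]; push_cast; omega)
      have := Ideal.mul_mem_left _ (single m' (1 : R)) (ih m'' (by rw [h2, hm]; push_cast; omega))
      rwa [single_mul_single, one_mul] at this
  intro m hm
  exact key (deg m - k).toNat m (by omega)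

lemma uniform_exact [DecidableEq Δ] [AddMonoid.FG M] (hincl : ∀ m, deg (incl m) = 1) (k : ℤ)
    (hfin : {m | deg m = k}.Finite)
    (hstep : ∀ m, k < deg m → ∃ m' m'', m = m' + m'' ∧ deg m'' = deg m - 1)
    {ν : Type*} (a : ν → Δ → ℤ) (f₀ : Δ → ℂ)
    (h0 : ∀ m, deg m = k → single m (1 : ℂ) ∈ Ideal.span (Set.range fun e => zfam incl f₀ (a e))) :
    ∃ h : MvPolynomial Δ ℂ, MvPolynomial.eval f₀ h ≠ 0 ∧
      (∀ f, MvPolynomial.eval f h ≠ 0 → ∀ m, k ≤ deg m →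
        single m (1 : ℂ) ∈ Ideal.span (Set.range fun e => zfam incl f (a e))) ∧
      ∀ {ι : Type} [Fintype ι] [DecidableEq ι] (b : ι → Δ → ℤ) (enc : ι → ℤ),
        Function.Injective enc →
        (∀ n, ∃ c : ι → ℤ, ∀ m, a n m = ∑ e, c e * b e m) →
        ∃ w : ℤ, ∀ f, MvPolynomial.eval f h ≠ 0 → ∀ x,
          kD (fun e => zfam incl f (b e)) enc x = 0 →
          gprojF deg (Set.Ici w) x ∈ LinearMap.range (kD (fun e => zfam incl f (b e)) enc) := by
  obtain ⟨h, hf₀, hh⟩ := nakayama_step deg incl hincl k hfin a f₀ h0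
  refine ⟨h, hf₀, ?_⟩
  let R' := Localization.Away h
  let φ : Δ → R' := fun m => algebraMap (MvPolynomial Δ ℂ) R' (MvPolynomial.X m)
  have hR' : ∀ m, k ≤ deg m →
      single m (1 : R') ∈ Ideal.span (Set.range fun e => zfam incl φ (a e)) := by
    refine span_propagate deg _ k hstep fun m hm => ?_
    have h1 := Ideal.mem_map_of_mem (mapRingHom M (algebraMap (MvPolynomial Δ ℂ) R')) (hh m hm)
    rw [Ideal.map_span, ← Set.range_comp, mapRingHom_single] at h1
    have h2 : (mapRingHom M (algebraMap (MvPolynomial Δ ℂ) R')) ∘ (fun e =>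
        zfam incl (MvPolynomial.X : Δ → MvPolynomial Δ ℂ) (a e)) =
        fun e => zfam incl φ (a e) := by
      funext e; simp [zfam_map, φ]
    rw [h2] at h1
    obtain ⟨u, hu⟩ := (IsLocalization.Away.algebraMap_isUnit h : IsUnit (algebraMap (MvPolynomial Δ ℂ) R' h))
    have h3 := Ideal.mul_mem_left _ (single 0 ((u⁻¹ : R'ˣ) : R')) h1
    rwa [single_mul_single, zero_add, ← hu, Units.inv_mul] at h3
  have hspec : ∀ f, MvPolynomial.eval f h ≠ 0 → ∃ ρ : R' →+* ℂ, Function.Surjective ρ ∧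
      ∀ m, ρ (φ m) = f m := by
    intro f hf
    refine ⟨IsLocalization.Away.lift h (g := MvPolynomial.eval f) (isUnit_iff_ne_zero.2 hf),
      fun c => ⟨algebraMap (MvPolynomial Δ ℂ) R' (MvPolynomial.C c), ?_⟩, fun m => ?_⟩
    · rw [IsLocalization.Away.lift_eq]; simp
    · rw [IsLocalization.Away.lift_eq]; simp
  refine ⟨?_, ?_⟩
  · intro f hf m hm
    obtain ⟨ρ, -, hρ⟩ := hspec f hf
    have h1 := Ideal.mem_map_of_mem (mapRingHom M ρ) (hR' m hm)
    rw [Ideal.map_span, ← Set.range_comp, mapRingHom_single, map_one] at h1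
    have h2 : (mapRingHom M ρ) ∘ (fun e => zfam incl φ (a e)) = fun e => zfam incl f (a e) := by
      funext e; simp [zfam_map, hρ]
    rwa [h2] at h1
  · intro ι _ _ b enc henc hab
    have hb : ∀ e, GHomog deg 1 (zfam incl φ (b e)) := fun e => zfam_homog deg incl hincl _ _
    have : IsNoetherianRing R' := IsLocalization.isNoetherianRing (Submonoid.powers h) R' inferInstance
    have : IsNoetherianRing (AddMonoidAlgebra R' M) := Algebra.FiniteType.isNoetherianRing R' _
    obtain ⟨w, hw⟩ := exists_trunc_exact deg (z := fun e => zfam incl φ (b e)) hb enc henc k (by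
      intro m hm
      refine Ideal.span_le.2 ?_ (hR' m hm)
      rintro _ ⟨n, rfl⟩
      obtain ⟨c, hc⟩ := hab n
      exact zfam_comb incl φ b (a n) c hc)
    refine ⟨w, fun f hf x hx => ?_⟩
    obtain ⟨ρ, hρs, hρ⟩ := hspec f hf
    have hz : (fun e => zfam incl f (b e)) = fun e => mapRingHom M ρ (zfam incl φ (b e)) := by
      funext e; simp [zfam_map, hρ]
    rw [hz] at hx ⊢
    exact trunc_exact_specialize deg ρ hρs hb enc henc _ hw x hx

end Family
end

noncomputable section
section Cone
open AddMonoidAlgebra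

/-- degree map -/
def cdeg {r : ℕ} (S : AddSubmonoid (Fin r → ℤ)) (degd : Fin r → ℤ) : ↥S →+ ℤ where
  toFun m := ∑ i, (m : Fin r → ℤ) i * degd i
  map_zero' := by simp
  map_add' a b := by simp [add_mul, Finset.sum_add_distrib]

lemma cdeg_apply {r : ℕ} (S : AddSubmonoid (Fin r → ℤ)) (degd : Fin r → ℤ) (m : ↥S) :
    cdeg S degd m = ∑ i, (m : Fin r → ℤ) i * degd i := rfl

variable {r : ℕ} {S : AddSubmonoid (Fin r → ℤ)} {gens : Finset (Fin r → ℤ)}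
  {degd : Fin r → ℤ}

lemma gens_mem (hcone : IsConeSemigroup r S gens) {g : Fin r → ℤ} (hg : g ∈ gens) : g ∈ S := by
  classical
  refine (hcone g).2 ⟨fun g' => if g' = g then 1 else 0, fun g' _ => by dsimp only; split_ifs <;> norm_num, ?_⟩
  intro i
  simp [hg]

lemma cdeg_eq_sum (hgor : ∀ g ∈ gens, ∑ i, g i * degd i = 1) (m : ↥S) (c : (Fin r → ℤ) → ℚ)
    (hc : ∀ i, ((m : Fin r → ℤ) i : ℚ) = ∑ g ∈ gens, c g * (g i : ℚ)) :
    (cdeg S degd m : ℚ) = ∑ g ∈ gens, c g := by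
  rw [cdeg_apply]
  push_cast
  simp only [hc, Finset.sum_mul]
  rw [Finset.sum_comm]
  refine Finset.sum_congr rfl fun g hg => ?_
  have := hgor g hg
  have h2 : (∑ i, (g i : ℚ) * (degd i : ℚ)) = 1 := by exact_mod_cast this
  simp only [mul_assoc, ← Finset.mul_sum, h2, mul_one]

lemma finite_deg_le (hcone : IsConeSemigroup r S gens) (hgor : ∀ g ∈ gens, ∑ i, g i * degd i = 1) (N : ℤ) : {m : ↥S | cdeg S degd m ≤ N}.Finite := by
  let B : Fin r → ℤ := fun i => ∑ g ∈ gens, N * |g i|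
  have hsub : {m : ↥S | cdeg S degd m ≤ N} ⊆ Subtype.val ⁻¹' (Set.Icc (-B) B) := by
    intro m hm
    obtain ⟨c, hc0, hc⟩ := (hcone m).1 m.2
    have hd := cdeg_eq_sum hgor m c hc
    have hm' : (cdeg S degd m : ℚ) ≤ N := by exact_mod_cast hm
    have hcN : ∀ g ∈ gens, c g ≤ N := by
      intro g hg
      have := Finset.single_le_sum (f := c) hc0 hg
      linarith
    have hb : ∀ i, |(m : Fin r → ℤ) i| ≤ B i := by
      intro i
      have : |((m : Fin r → ℤ) i : ℚ)| ≤ (B i : ℚ) := by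
        rw [hc i]
        refine (Finset.abs_sum_le_sum_abs _ _).trans ?_
        simp only [B]
        push_cast
        refine Finset.sum_le_sum fun g hg => ?_
        rw [abs_mul, abs_of_nonneg (hc0 g hg)]
        exact mul_le_mul_of_nonneg_right (hcN g hg) (abs_nonneg _)
      exact_mod_cast this
    refine ⟨fun i => ?_, fun i => ?_⟩
    · exact neg_le_of_abs_le (hb i)
    · exact le_of_abs_le (hb i)
  exact (Set.Finite.preimage Subtype.val_injective.injOn (Set.finite_Icc _ _)).subset hsub

lemma exists_sub_gen (hcone : IsConeSemigroup r S gens) (hgor : ∀ g ∈ gens, ∑ i, g i * degd i = 1) (m : ↥S) (hm : (gens.card : ℤ) < cdeg S degd m) :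
    ∃ m' m'' : ↥S, m = m' + m'' ∧ cdeg S degd m' = 1 ∧ cdeg S degd m'' = cdeg S degd m - 1 := by
  classical
  obtain ⟨c, hc0, hc⟩ := (hcone m).1 m.2
  have hd := cdeg_eq_sum hgor m c hc
  obtain ⟨g, hg, hcg⟩ : ∃ g ∈ gens, 1 ≤ c g := by
    by_contra hne
    push Not at hne
    have h1 : ∑ g ∈ gens, c g ≤ ∑ g ∈ gens, (1 : ℚ) := Finset.sum_le_sum fun g hg => (hne g hg).le
    simp only [Finset.sum_const, nsmul_eq_mul, mul_one] at h1
    rw [← hd] at h1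
    have h2 : cdeg S degd m ≤ gens.card := by exact_mod_cast h1
    omega
  have hmem : (m : Fin r → ℤ) - g ∈ S := by
    refine (hcone _).2 ⟨fun g' => c g' - if g' = g then 1 else 0, ?_, ?_⟩
    · intro g' hg'
      simp only
      split_ifs with h
      · subst h; linarith
      · have := hc0 g' hg'; linarith
    · intro i
      simp [sub_mul, Finset.sum_sub_distrib, hg, ← hc i]
  have e1 : cdeg S degd ⟨g, gens_mem hcone hg⟩ = 1 := hgor g hg
  have e0 : m = ⟨g, gens_mem hcone hg⟩ + ⟨_, hmem⟩ := by ext; simp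
  refine ⟨⟨g, gens_mem hcone hg⟩, ⟨_, hmem⟩, e0, e1, ?_⟩
  have := congrArg (cdeg S degd) e0
  rw [map_add, e1] at this
  omega

lemma cone_fg (hcone : IsConeSemigroup r S gens) (hgor : ∀ g ∈ gens, ∑ i, g i * degd i = 1) : AddMonoid.FG ↥S := by
  refine ⟨?_⟩
  have hfin := finite_deg_le hcone hgor (gens.card + 1)
  refine (AddSubmonoid.fg_iff _).2 ⟨_, ?_, hfin⟩
  rw [eq_top_iff]
  have key : ∀ n : ℕ, ∀ m : ↥S, cdeg S degd m ≤ gens.card + 1 + n →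
      m ∈ AddSubmonoid.closure {m : ↥S | cdeg S degd m ≤ gens.card + 1} := by
    intro n
    induction n with
    | zero => intro m hm; exact AddSubmonoid.subset_closure (by simpa using hm)
    | succ n ih =>
      intro m hm
      by_cases h : cdeg S degd m ≤ gens.card + 1
      · exact AddSubmonoid.subset_closure h
      · obtain ⟨m', m'', rfl, h1, h2⟩ := exists_sub_gen hcone hgor m (by omega)
        refine add_mem (AddSubmonoid.subset_closure ?_) (ih _ ?_)
        · change cdeg S degd m' ≤ gens.card + 1
          rw [h1]; omega
        · rw [h2]; push_cast at hm ⊢; omega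
  intro m _
  exact key (cdeg S degd m).toNat m (by omega)

end Cone

section Misc
open AddMonoidAlgebra
variable {M : Type*} [AddCommMonoid M] (deg : M →+ ℤ)

lemma finite_quotient (hfin : ∀ N : ℤ, {m | deg m ≤ N}.Finite) (J : Ideal (AddMonoidAlgebra ℂ M))
    (k : ℤ) (h : ∀ m, k ≤ deg m → single m (1 : ℂ) ∈ J) :
    FiniteDimensional ℂ (AddMonoidAlgebra ℂ M ⧸ J) := by
  refine ⟨(Submodule.fg_def).2 ⟨(fun m => Ideal.Quotient.mkₐ ℂ J (single m (1 : ℂ))) '' {m | deg m ≤ k},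
    (hfin k).image _, ?_⟩⟩
  rw [eq_top_iff]
  rintro x -
  obtain ⟨x, rfl⟩ := Ideal.Quotient.mkₐ_surjective ℂ J x
  rw [eq_sum_single x, map_sum]
  refine Submodule.sum_mem _ fun m _ => ?_
  have e1 : single m (x.coeff m) = x.coeff m • single m (1 : ℂ) := by simp
  rw [e1, map_smul]
  refine Submodule.smul_mem _ _ ?_
  by_cases hm : deg m ≤ k
  · exact Submodule.subset_span ⟨m, hm, rfl⟩
  · have : Ideal.Quotient.mkₐ ℂ J (single m (1 : ℂ)) = 0 :=
      Ideal.Quotient.eq_zero_iff_mem.2 (h m (by omega))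
    rw [this]; exact Submodule.zero_mem _

lemma finite_range_gprojF {ι : Type*} [Fintype ι] [DecidableEq ι]
    (hfin : ∀ N : ℤ, {m | deg m ≤ N}.Finite) (w : ℤ) :
    FiniteDimensional ℂ (LinearMap.range
      (gprojF deg (Set.Iio w) : (Finset ι → AddMonoidAlgebra ℂ M) →ₗ[ℂ] _)) := by
  have hF : {k : Σ _ : Finset ι, M | deg k.2 ≤ w}.Finite := by
    have : (⋃ s : Finset ι, (fun m => (⟨s, m⟩ : Σ _ : Finset ι, M)) '' {m | deg m ≤ w}).Finite :=
      Set.finite_iUnion fun s => (hfin w).image _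
    refine this.subset ?_
    rintro ⟨s, m⟩ h
    simp only [Set.mem_iUnion]
    exact ⟨s, m, h, rfl⟩
  have := FiniteDimensional.span_of_finite ℂ (hF.image (kbasis ℂ M ι))
  refine Submodule.finiteDimensional_of_le (S₂ := Submodule.span ℂ (kbasis ℂ M ι '' {k | deg k.2 ≤ w})) ?_
  rintro _ ⟨x, rfl⟩
  rw [Module.Basis.mem_span_image]
  rintro ⟨s, m⟩ h
  simp only [Finset.mem_coe, Finsupp.mem_support_iff, kbasis_repr, gprojF_apply, gproj_coeff] at h
  simp only [Set.mem_ofPred_eq]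
  by_contra hne
  apply h
  rw [if_neg]
  simp only [Set.mem_ofPred_eq, Set.mem_Iio]
  omega

lemma gprojF_compl {ι : Type*} (w : ℤ) (x : Finset ι → AddMonoidAlgebra ℂ M) :
    x - gprojF deg (Set.Iio w) x = gprojF deg (Set.Ici w) x := by
  funext s
  ext m
  simp only [Pi.sub_apply, gprojF_apply, coeff_sub, Finsupp.sub_apply, gproj_coeff,
    Set.mem_ofPred_eq, Set.mem_Iio, Set.mem_Ici]
  by_cases h : deg m + (s.card : ℤ) < w
  · rw [if_pos h, if_neg (not_le.2 h), sub_self]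
  · rw [if_neg h, if_pos (not_lt.1 h), sub_zero]

/-- the Koszul differential as a linear function of the coefficients -/
def kPhi {Δ : Type*} [Fintype Δ] (incl : Δ → M) {ι : Type*} [Fintype ι] [DecidableEq ι]
    (b : ι → Δ → ℤ) (enc : ι → ℤ) :
    (Δ → ℂ) →ₗ[ℂ] ((Finset ι → AddMonoidAlgebra ℂ M) →ₗ[ℂ] (Finset ι → AddMonoidAlgebra ℂ M)) where
  toFun f := koszulD (fun e => zfam incl f (b e)) enc
  map_add' f g := by
    refine LinearMap.ext fun x => ?_
    funext s
    have h : ∀ e, zfam incl (f + g) (b e) = zfam incl f (b e) + zfam incl g (b e) := by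
      intro e
      simp [zfam, add_mul, Finset.sum_add_distrib, AddMonoidAlgebra.single_add]
    simp only [LinearMap.add_apply, Pi.add_apply, koszulD_eq_kD, kD_apply, h, add_mul, mul_add,
      Finset.sum_add_distrib]
  map_smul' c f := by
    refine LinearMap.ext fun x => ?_
    funext s
    have h : ∀ e, zfam incl (c • f) (b e) = c • zfam incl f (b e) := by
      intro e
      simp [zfam, mul_assoc, Finset.smul_sum]
    simp only [LinearMap.smul_apply, Pi.smul_apply, koszulD_eq_kD, kD_apply, h, RingHom.id_apply,
      Finset.smul_sum, smul_mul_assoc, mul_smul_comm]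

lemma kPhi_apply {Δ : Type*} [Fintype Δ] (incl : Δ → M) {ι : Type*} [Fintype ι] [DecidableEq ι]
    (b : ι → Δ → ℤ) (enc : ι → ℤ) (f : Δ → ℂ) :
    kPhi incl b enc f = koszulD (fun e => zfam incl f (b e)) enc := rfl

/-- semicontinuity of the dimension of cohomology -/
lemma coh_semicont {Δ : Type*} [Fintype Δ] (incl : Δ → M) (hincl : ∀ m, deg (incl m) = 1)
    (hfin : ∀ N : ℤ, {m | deg m ≤ N}.Finite)
    {ι : Type*} [Fintype ι] [DecidableEq ι]
    (b : ι → Δ → ℤ) (enc : ι → ℤ) (henc : Function.Injective enc) (U : Set (Δ → ℂ)) (w : ℤ)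
    (hex : ∀ f ∈ U, ∀ x, kD (fun e => zfam incl f (b e)) enc x = 0 →
      gprojF deg (Set.Ici w) x ∈ LinearMap.range (kD (fun e => zfam incl f (b e)) enc))
    (f₀ : Δ → ℂ) (hf₀ : f₀ ∈ U) :
    ∃ p : MvPolynomial Δ ℂ, MvPolynomial.eval f₀ p ≠ 0 ∧ ∀ f ∈ U, MvPolynomial.eval f p ≠ 0 →
      FiniteDimensional ℂ (opCohomology (koszulD (fun e => zfam incl f (b e)) enc)) ∧
      Module.finrank ℂ (opCohomology (koszulD (fun e => zfam incl f (b e)) enc)) ≤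
      Module.finrank ℂ (opCohomology (koszulD (fun e => zfam incl f₀ (b e)) enc)) := by
  classical
  let q : (Finset ι → AddMonoidAlgebra ℂ M) →ₗ[ℂ] (Finset ι → AddMonoidAlgebra ℂ M) :=
    gprojF deg (Set.Iio w)
  have hq : FiniteDimensional ℂ (LinearMap.range q) := finite_range_gprojF deg hfin w
  have hdim : ∀ f ∈ U, FiniteDimensional ℂ (opCohomology (kPhi incl b enc f)) ∧
    Module.finrank ℂ (opCohomology (kPhi incl b enc f)) +
      2 * Module.finrank ℂ (LinearMap.range (kPhi incl b enc f ∘ₗ q)) =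
      Module.finrank ℂ (LinearMap.range q) := by
    intro f hf
    refine finrank_opCohomology _ q (fun x => kD_sq _ enc henc x) (gprojF_idem deg _)
      (gprojF_kD deg (fun e => zfam_homog deg incl hincl _ _) enc _) ?_
    intro x hx
    rw [gprojF_compl]
    exact hex f hf x hx
  obtain ⟨p, hp0, hp⟩ := rank_semicont (kPhi incl b enc) q f₀
  refine ⟨p, hp0, fun f hf hpf => ?_⟩
  have h1 := hp f hpf
  have h2 := hdim f hf
  have h3 := hdim f₀ hf₀
  refine ⟨h2.1, ?_⟩
  have h4 : Module.finrank ℂ (opCohomology (kPhi incl b enc f)) ≤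
      Module.finrank ℂ (opCohomology (kPhi incl b enc f₀)) := by omega
  exact h4

lemma opCohomology_equiv {V V' : Type*} [AddCommGroup V] [Module ℂ V] [AddCommGroup V']
    [Module ℂ V'] (L : V ≃ₗ[ℂ] V') (D : V →ₗ[ℂ] V) (D' : V' →ₗ[ℂ] V')
    (h : ∀ x, L (D x) = D' (L x)) : Nonempty (opCohomology D ≃ₗ[ℂ] opCohomology D') := by
  have hk : (LinearMap.ker D).map (L : V →ₗ[ℂ] V') = LinearMap.ker D' := by
    ext y
    constructor
    · rintro ⟨x, hx, rfl⟩
      change D' (L x) = 0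
      rw [← h, show D x = 0 from hx, map_zero]
    · intro hy
      refine ⟨L.symm y, ?_, by simp⟩
      change D (L.symm y) = 0
      apply L.injective
      rw [h, map_zero, L.apply_symm_apply]
      exact hy
  refine ⟨Submodule.Quotient.equiv _ _ (L.ofSubmodules _ _ hk) ?_⟩
  ext ⟨y, hy⟩
  constructor
  · rintro ⟨⟨x, hx⟩, ⟨w, hw⟩, hxy⟩
    refine ⟨L w, ?_⟩
    rw [← h, hw, ← hxy]
    rfl
  · rintro ⟨w, hw⟩
    have hw' : D' w = y := hw
    have hLD : L (D (L.symm w)) = y := by rw [h, L.apply_symm_apply, hw']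
    have hkk : D (L.symm y) = 0 := by
      apply L.injective
      rw [h, map_zero, L.apply_symm_apply]
      exact hy
    refine ⟨⟨L.symm y, hkk⟩, ⟨L.symm w, ?_⟩, ?_⟩
    · change D (L.symm w) = L.symm y
      rw [← hLD, L.symm_apply_apply]
    · apply Subtype.ext
      change L (L.symm y) = y
      simp

lemma koszul_reindex {A : Type*} [CommRing A] [Algebra ℂ A] {ι ι' : Type*} [Fintype ι]
    [DecidableEq ι] [Fintype ι'] [DecidableEq ι'] (σ : ι ≃ ι') (z : ι → A) (z' : ι' → A)
    (hz : ∀ e, z' (σ e) = z e) (enc : ι → ℤ) (enc' : ι' → ℤ)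
    (henc : ∀ e e', enc' (σ e) < enc' (σ e') ↔ enc e < enc e') :
    Nonempty (opCohomology (koszulD z enc) ≃ₗ[ℂ] opCohomology (koszulD z' enc')) := by
  let L : (Finset ι' → A) ≃ₗ[ℂ] (Finset ι → A) := LinearEquiv.funCongrLeft ℂ A (Equiv.finsetCongr σ)
  have hL : ∀ x s, L x s = x (s.map σ.toEmbedding) := fun x s => rfl
  obtain ⟨e⟩ := opCohomology_equiv L (koszulD z' enc') (koszulD z enc) (by
    intro x
    funext s
    rw [hL, koszulD_eq_kD, koszulD_eq_kD, kD_apply, kD_apply]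
    refine Finset.sum_nbij' σ.symm σ ?_ ?_ ?_ ?_ ?_
    · intro e he
      simp only [Finset.mem_sdiff, Finset.mem_univ, true_and, Finset.mem_map_equiv] at he ⊢
      exact he
    · intro e he
      simp only [Finset.mem_sdiff, Finset.mem_univ, true_and, Finset.mem_map_equiv] at he ⊢
      simpa using he
    · intro e _; simp
    · intro e _; simp
    · intro e' he
      obtain ⟨e, rfl⟩ := σ.surjective e'
      rw [σ.symm_apply_apply, hz, hL, Finset.map_insert]
      have : kcnt enc' (s.map σ.toEmbedding) (σ e) = kcnt enc s e := by
        unfold kcnt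
        rw [Finset.filter_map, Finset.card_map]
        congr 1
        ext a
        simp [henc]
      rw [this]
      rfl)
  exact ⟨e.symm⟩

end Misc
end

noncomputable section
section Final
open AddMonoidAlgebra
variable {r : ℕ} {S : AddSubmonoid (Fin r → ℤ)} (Δfin : Finset ↥S)

/-- the pairing of a point of `Δ` with `n` -/
def ddot (m : ↥Δfin) (n : Fin r → ℤ) : ℤ := ∑ i, m.val.val i * n i

/-- the coefficients of the graded pieces -/
def bgr (n₀ : Fin r → ℤ) (e : Fin r × ↥(Igrades Δfin n₀)) (m : ↥Δfin) : ℤ :=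
  if ddot Δfin m n₀ = e.2 then m.val.val e.1 else 0

/-- the order encoding -/
def encW (n₀ : Fin r → ℤ) (e : Fin r × ↥(Igrades Δfin n₀)) : ℤ := (e.2 : ℤ) * r + (e.1 : ℤ)

lemma zEl_eq (f : ↥Δfin → ℂ) (n : Fin r → ℤ) :
    zEl Δfin f n = zfam (Subtype.val : ↥Δfin → ↥S) f (fun m => ddot Δfin m n) := by
  rw [zEl, zfam, Finset.univ_eq_attach]
  refine Finset.sum_congr rfl fun m _ => ?_
  rw [smul_single, smul_eq_mul, mul_one]
  rfl

lemma zGraded_eq (f : ↥Δfin → ℂ) (n₀ : Fin r → ℤ) :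
    zGraded Δfin f n₀ =
      fun e => zfam (Subtype.val : ↥Δfin → ↥S) f (bgr Δfin n₀ e) := by
  funext e
  rw [zGraded, zfam, Finset.univ_eq_attach, Finset.sum_filter]
  refine Finset.sum_congr rfl fun m _ => ?_
  rw [smul_single, smul_eq_mul, mul_one, bgr]
  change (if ddot Δfin m n₀ = _ then _ else _) = _
  split_ifs
  · rfl
  · simp

lemma encW_lt (n₀ : Fin r → ℤ) (e e' : Fin r × ↥(Igrades Δfin n₀)) :
    encW Δfin n₀ e < encW Δfin n₀ e' ↔
      ((e.2 : ℤ) < e'.2 ∨ (e.2 : ℤ) = e'.2 ∧ e.1 < e'.1) := by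
  obtain ⟨i, j⟩ := e
  obtain ⟨i', j'⟩ := e'
  simp only [encW]
  have h1 := i.2
  have h2 := i'.2
  rw [Fin.lt_def]
  generalize (j : ℤ) = a
  generalize (j' : ℤ) = b
  have h0 : (0 : ℤ) < r := by omega
  rcases lt_trichotomy a b with h | h | h
  · have : (a + 1) * r ≤ b * r := mul_le_mul_of_nonneg_right (by omega) h0.le
    rw [add_mul, one_mul] at this
    constructor
    · intro _; exact Or.inl h
    · intro _; omega
  · subst h
    omega
  · have : (b + 1) * r ≤ a * r := mul_le_mul_of_nonneg_right (by omega) h0.le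
    rw [add_mul, one_mul] at this
    constructor
    · intro _; exfalso; omega
    · intro _; exfalso; omega

lemma encW_inj (n₀ : Fin r → ℤ) : Function.Injective (encW Δfin n₀) := by
  intro e e' h
  have h1 := (encW_lt Δfin n₀ e e').not.1 (by omega)
  have h2 := (encW_lt Δfin n₀ e' e).not.1 (by omega)
  push Not at h1 h2
  have h3 : (e.2 : ℤ) = e'.2 := le_antisymm h2.1 h1.1
  exact Prod.ext (le_antisymm (h2.2 h3.symm) (h1.2 h3)) (Subtype.ext h3)

lemma ddot_mem (n₀ : Fin r → ℤ) (m : ↥Δfin) : ddot Δfin m n₀ ∈ Igrades Δfin n₀ :=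
  Finset.mem_image.2 ⟨m.1, m.2, rfl⟩

lemma exists_ddot (n₀ : Fin r → ℤ) (j : ↥(Igrades Δfin n₀)) :
    ∃ m : ↥Δfin, ddot Δfin m n₀ = j := by
  obtain ⟨m, hm, h⟩ := Finset.mem_image.1 j.2
  exact ⟨⟨m, hm⟩, h⟩

lemma bgr_comb (n₀ n : Fin r → ℤ) (m : ↥Δfin) :
    ddot Δfin m n = ∑ e : Fin r × ↥(Igrades Δfin n₀), n e.1 * bgr Δfin n₀ e m := by
  rw [Fintype.sum_prod_type]
  refine Finset.sum_congr rfl fun i _ => ?_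
  rw [Finset.sum_eq_single (⟨ddot Δfin m n₀, ddot_mem Δfin n₀ m⟩ : ↥(Igrades Δfin n₀))]
  · simp [bgr, mul_comm]
  · intro j _ hj
    rw [bgr, if_neg, mul_zero]
    intro h
    exact hj (Subtype.ext h.symm)
  · simp

/-- the combinatorial type of `n₀` -/
def relN (n₀ : Fin r → ℤ) (m m' : ↥Δfin) : Prop := ddot Δfin m n₀ ≤ ddot Δfin m' n₀

lemma W_equiv (n₀ n₁ : Fin r → ℤ) (h : relN Δfin n₀ = relN Δfin n₁) (f : ↥Δfin → ℂ) :
    Nonempty (Wcoh Δfin f n₀ ≃ₗ[ℂ] Wcoh Δfin f n₁) := by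
  have hle : ∀ m m', ddot Δfin m n₀ ≤ ddot Δfin m' n₀ ↔ ddot Δfin m n₁ ≤ ddot Δfin m' n₁ :=
    fun m m' => iff_of_eq (congrFun (congrFun h m) m')
  have heq : ∀ m m', ddot Δfin m n₀ = ddot Δfin m' n₀ ↔ ddot Δfin m n₁ = ddot Δfin m' n₁ :=
    fun m m' => by rw [le_antisymm_iff, le_antisymm_iff, hle, hle]
  have hlt : ∀ m m', ddot Δfin m n₀ < ddot Δfin m' n₀ ↔ ddot Δfin m n₁ < ddot Δfin m' n₁ :=
    fun m m' => by rw [← not_le, ← not_le, hle]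
  choose c₀ hc₀ using exists_ddot Δfin n₀
  choose c₁ hc₁ using exists_ddot Δfin n₁
  let σ₂ : ↥(Igrades Δfin n₀) ≃ ↥(Igrades Δfin n₁) :=
    { toFun := fun j => ⟨ddot Δfin (c₀ j) n₁, ddot_mem Δfin n₁ _⟩
      invFun := fun j => ⟨ddot Δfin (c₁ j) n₀, ddot_mem Δfin n₀ _⟩
      left_inv := fun j => by
        refine Subtype.ext ?_
        change ddot Δfin (c₁ _) n₀ = _
        rw [← hc₀ j, heq, hc₁]
      right_inv := fun j => by
        refine Subtype.ext ?_
        change ddot Δfin (c₀ _) n₁ = _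
        rw [← hc₁ j, ← heq, hc₀] }
  have hσ : ∀ j, ((σ₂ j : ↥(Igrades Δfin n₁)) : ℤ) = ddot Δfin (c₀ j) n₁ := fun j => rfl
  refine koszul_reindex (Equiv.prodCongr (Equiv.refl _) σ₂) _ _ ?_ _ _ ?_
  · rintro ⟨i, j⟩
    rw [zGraded_eq, zGraded_eq]
    dsimp only
    congr 1
    funext m
    simp only [bgr, Equiv.prodCongr_apply, Prod.map, Equiv.refl_apply, hσ]
    simp only [← heq, hc₀]
  · rintro ⟨i, j⟩ ⟨i', j'⟩
    refine (encW_lt Δfin n₁ _ _).trans (Iff.trans ?_ (encW_lt Δfin n₀ _ _).symm)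
    simp only [Equiv.prodCongr_apply, Prod.map, Equiv.refl_apply, hσ]
    rw [← hlt, ← heq, hc₀, hc₀]

end Final
end

/-- Strongly non-degenerate coefficient functions form a Zariski open
subset of the space `ℂ^Δ` of all coefficient functions: there is a collection `P` of
polynomials on `ℂ^Δ` such that `f` is strongly non-degenerate iff some `p ∈ P` satisfies
`p(f) ≠ 0`. -/
theorem strongly_nondegenerate_is_zariski_open
    (r : ℕ) (S : AddSubmonoid (Fin r → ℤ))
    (gens : Finset (Fin r → ℤ)) (hcone : IsConeSemigroup r S gens)
    (degd : Fin r → ℤ) (hgor : ∀ g ∈ gens, ∑ i, g i * degd i = 1)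
    (Δfin : Finset ↥S)
    (hΔ : ∀ m : ↥S, m ∈ Δfin ↔ ∑ i, (m : Fin r → ℤ) i * degd i = 1) :
    ∃ P : Set (MvPolynomial ↥Δfin ℂ), ∀ f : ↥Δfin → ℂ,
      IsStronglyNonDeg Δfin f ↔ ∃ p ∈ P, MvPolynomial.eval f p ≠ 0 := by
  classical
  refine ⟨{p | ∀ f, MvPolynomial.eval f p ≠ 0 → IsStronglyNonDeg Δfin f}, fun f₀ =>
    ⟨fun hf₀ => ?_, fun ⟨p, hp, hne⟩ => hp f₀ hne⟩⟩
  have hincl : ∀ m : ↥Δfin, cdeg S degd (m : ↥S) = 1 := fun m => (hΔ m).1 m.2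
  have hfin := finite_deg_le hcone hgor
  have : AddMonoid.FG ↥S := cone_fg hcone hgor
  let a : (Fin r → ℤ) → ↥Δfin → ℤ := fun n m => ddot Δfin m n
  have hz : ∀ f : ↥Δfin → ℂ, zEl Δfin f = fun n => zfam (Subtype.val : ↥Δfin → ↥S) f (a n) :=
    fun f => funext fun n => zEl_eq Δfin f n
  obtain ⟨hnd, hmin⟩ := hf₀
  rw [hz] at hnd
  obtain ⟨k₀, hk₀⟩ := exists_degree_bound (cdeg S degd)
    (fun n => zfam_homog (cdeg S degd) Subtype.val hincl f₀ (a n)) hnd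
  obtain ⟨h, hh₀, hh1, hh2⟩ := uniform_exact (cdeg S degd) (Subtype.val : ↥Δfin → ↥S) hincl
    (max k₀ gens.card)
    ((hfin (max k₀ gens.card)).subset fun m hm => le_of_eq hm)
    (fun m hm => by
      obtain ⟨m', m'', h1, _, h3⟩ := exists_sub_gen hcone hgor m (lt_of_le_of_lt (le_max_right _ _) hm)
      exact ⟨m', m'', h1, h3⟩)
    a f₀ (fun m hm => hk₀ m (by rw [hm]; exact le_max_left _ _))
  have step : ∀ n₀ : Fin r → ℤ, ∃ p : MvPolynomial ↥Δfin ℂ, MvPolynomial.eval f₀ p ≠ 0 ∧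
      ∀ f, MvPolynomial.eval f h ≠ 0 → MvPolynomial.eval f p ≠ 0 →
        FiniteDimensional ℂ (Wcoh Δfin f n₀) ∧
        Module.finrank ℂ (Wcoh Δfin f n₀) ≤ Module.finrank ℂ (Wcoh Δfin f₀ n₀) := by
    intro n₀
    obtain ⟨w, hw⟩ := hh2 (bgr Δfin n₀) (encW Δfin n₀) (encW_inj Δfin n₀)
      (fun n => ⟨fun e => n e.1, fun m => bgr_comb Δfin n₀ n m⟩)
    obtain ⟨p, hp0, hp⟩ := coh_semicont (cdeg S degd) (Subtype.val : ↥Δfin → ↥S) hincl hfin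
      (bgr Δfin n₀) (encW Δfin n₀) (encW_inj Δfin n₀) {f | MvPolynomial.eval f h ≠ 0} w
      (fun f hf => hw f hf) f₀ hh₀
    refine ⟨p, hp0, fun f hf hpf => ?_⟩
    have h3 := hp f hf hpf
    rw [← zGraded_eq, ← zGraded_eq] at h3
    exact h3
  choose p hp0 hp using step
  let q : (↥Δfin → ↥Δfin → Prop) → MvPolynomial ↥Δfin ℂ := fun ρ =>
    if hρ : ∃ n, relN Δfin n = ρ then p hρ.choose else 1
  refine ⟨h * ∏ ρ, q ρ, ?_, ?_⟩
  · intro f hf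
    rw [map_mul, map_prod] at hf
    have hfh := left_ne_zero_of_mul hf
    have hfq := Finset.prod_ne_zero_iff.1 (right_ne_zero_of_mul hf)
    refine ⟨?_, fun n₀ => ?_⟩
    · rw [hz]
      exact finite_quotient (cdeg S degd) hfin _ _ (hh1 f hfh)
    · have hρ : ∃ n, relN Δfin n = relN Δfin n₀ := ⟨n₀, rfl⟩
      have h4 := hfq (relN Δfin n₀) (Finset.mem_univ _)
      simp only [q] at h4
      rw [dif_pos hρ] at h4
      obtain ⟨h5, h6⟩ := hp _ f hfh h4
      obtain ⟨e⟩ := W_equiv Δfin _ _ hρ.choose_spec f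
      obtain ⟨e₀⟩ := W_equiv Δfin _ _ hρ.choose_spec f₀
      refine ⟨Module.Finite.equiv e, fun g hg => ?_⟩
      rw [← e.finrank_eq]
      refine h6.trans ?_
      rw [e₀.finrank_eq]
      exact (hmin n₀).2 g hg
  · rw [map_mul, map_prod]
    refine mul_ne_zero hh₀ (Finset.prod_ne_zero_iff.2 fun ρ _ => ?_)
    simp only [q]
    split_ifs with hρ
    · exact hp0 _
    · simp

end
end

section
/- Let C be a simplicial cone with lattice generators m₁,…,m_d of its rays, where d = rk M. Then the quotient of ℂ[C∩M] by the ideal generated by [m₁],…,[m_d] has ℂ-basis {[m] : m ∈ Box(C)}, where Box(C) is the set of lattice points of C whose coordinates in the basis m₁,…,m_d (over ℚ) all lie in [0,1). In particular the [m_i] form a regular sequence in ℂ[C∩M]. -/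
noncomputable section

namespace BoxAux

lemma mem_iff {d : ℕ} {T : Type*} [AddCommMonoid T] (g : Fin d → T) (c : T → Fin d → ℚ)
    (hadd : ∀ s t, c (s + t) = c s + c t) (hg : ∀ i, c (g i) = Pi.single i 1)
    (h0 : ∀ s i, 0 ≤ c s i) (hdiv : ∀ s i, 1 ≤ c s i → ∃ t, s = t + g i)
    (J : Set (Fin d)) (x : AddMonoidAlgebra ℂ T) :
    x ∈ Ideal.span ((fun i => AddMonoidAlgebra.single (g i) (1 : ℂ)) '' J) ↔
      ∀ s, x.coeff s ≠ 0 → ∃ i ∈ J, 1 ≤ c s i := by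
  have : (fun i => AddMonoidAlgebra.single (g i) (1 : ℂ)) '' J
      = AddMonoidAlgebra.of' ℂ T '' (g '' J) := by
    rw [Set.image_image]; rfl
  rw [this, AddMonoidAlgebra.mem_ideal_span_of'_image]
  refine forall_congr' fun s => ?_
  rw [Finsupp.mem_support_iff]
  refine imp_congr_right fun _ => ?_
  constructor
  · rintro ⟨_, ⟨i, hi, rfl⟩, t, rfl⟩
    refine ⟨i, hi, ?_⟩
    have := h0 t i
    simp [hadd, hg, this]
  · rintro ⟨i, hi, h⟩
    exact ⟨g i, ⟨i, hi, rfl⟩, hdiv s i h⟩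

lemma regular {d : ℕ} {T : Type*} [AddCommMonoid T] [IsCancelAdd T]
    (g : Fin d → T) (c : T → Fin d → ℚ)
    (hadd : ∀ s t, c (s + t) = c s + c t) (hg : ∀ i, c (g i) = Pi.single i 1)
    (h0 : ∀ s i, 0 ≤ c s i) (hdiv : ∀ s i, 1 ≤ c s i → ∃ t, s = t + g i) :
    RingTheory.Sequence.IsRegular (AddMonoidAlgebra ℂ T)
      (List.ofFn fun i : Fin d => (AddMonoidAlgebra.single (g i) (1 : ℂ))) := by
  have hc0 : c 0 = 0 := by
    have := hadd 0 0
    simpa using this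
  refine { regular_mod_prev := ?_, top_ne_smul := ?_ }
  · intro n hn
    have hn' : n < d := by simpa using hn
    have hset : Ideal.ofList ((List.ofFn fun i : Fin d =>
        (AddMonoidAlgebra.single (g i) (1 : ℂ))).take n)
        = Ideal.span ((fun i => AddMonoidAlgebra.single (g i) (1 : ℂ)) '' {i : Fin d | i.1 < n}) := by
      unfold Ideal.ofList
      congr 1
      ext r
      simp only [Set.mem_ofPred_eq, List.mem_take_iff_getElem, Set.mem_image, List.getElem_ofFn,
        List.length_ofFn]
      constructor
      · rintro ⟨j, hj, rfl⟩
        exact ⟨⟨j, by omega⟩, by simp; omega, rfl⟩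
      · rintro ⟨j, hj, rfl⟩
        exact ⟨j.1, by simp; omega, rfl⟩
    rw [hset, isSMulRegular_quotient_iff_mem_of_smul_mem]
    intro x hx
    rw [smul_eq_mul, Ideal.mul_top, mem_iff g c hadd hg h0 hdiv] at *
    intro s hs
    rw [List.getElem_ofFn] at hx
    obtain ⟨i, hi, h⟩ := hx (g ⟨n, hn'⟩ + s) (by
      rw [smul_eq_mul, AddMonoidAlgebra.coeff_single_mul_eq_mul_coeff s]
      · simpa using hs
      · intro m' _
        exact add_right_inj _)
    refine ⟨i, hi, ?_⟩
    have hne : i ≠ ⟨n, hn'⟩ := by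
      rintro rfl
      simp at hi
    simpa [hadd, hg, hne] using h
  · intro h
    have h1 : (1 : AddMonoidAlgebra ℂ T) ∈ Ideal.span
        ((fun i => AddMonoidAlgebra.single (g i) (1 : ℂ)) '' Set.univ) := by
      have h2 : (1 : AddMonoidAlgebra ℂ T) ∈ (⊤ : Ideal (AddMonoidAlgebra ℂ T)) := trivial
      rw [h, smul_eq_mul, Ideal.mul_top] at h2
      refine Ideal.span_mono ?_ h2
      intro r hr
      obtain ⟨i, hi⟩ := List.mem_ofFn.1 hr
      exact ⟨i, trivial, hi⟩
    rw [mem_iff g c hadd hg h0 hdiv] at h1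
    obtain ⟨i, -, h⟩ := h1 0 (by simp [AddMonoidAlgebra.one_def])
    rw [hc0] at h
    norm_num at h

lemma basis {d : ℕ} {T : Type*} [AddCommMonoid T]
    (g : Fin d → T) (c : T → Fin d → ℚ)
    (hadd : ∀ s t, c (s + t) = c s + c t) (hg : ∀ i, c (g i) = Pi.single i 1)
    (h0 : ∀ s i, 0 ≤ c s i) (hdiv : ∀ s i, 1 ≤ c s i → ∃ t, s = t + g i)
    (P : T → Prop) (hP : ∀ s, P s ↔ ∀ i, c s i < 1) :
    LinearIndependent ℂ (fun b : {m : T // P m} =>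
      Ideal.Quotient.mk (Ideal.span (Set.range fun i : Fin d =>
          AddMonoidAlgebra.single (g i) (1 : ℂ)))
        (AddMonoidAlgebra.single (b : T) (1 : ℂ))) ∧
    ⊤ ≤ Submodule.span ℂ (Set.range (fun b : {m : T // P m} =>
      Ideal.Quotient.mk (Ideal.span (Set.range fun i : Fin d =>
          AddMonoidAlgebra.single (g i) (1 : ℂ)))
        (AddMonoidAlgebra.single (b : T) (1 : ℂ)))) := by
  classical
  rw [← Set.image_univ (f := fun i : Fin d => AddMonoidAlgebra.single (g i) (1 : ℂ))]
  have key := mem_iff g c hadd hg h0 hdiv Set.univ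
  set I := Ideal.span ((fun i => AddMonoidAlgebra.single (g i) (1 : ℂ)) '' Set.univ) with hI
  have hsm : ∀ (w : ℂ) (x : AddMonoidAlgebra ℂ T),
      w • Ideal.Quotient.mk I x = Ideal.Quotient.mk I (w • x) := fun w x => rfl
  constructor
  · rw [linearIndependent_iff']
    intro F w hw b hb
    simp_rw [hsm] at hw
    rw [← map_sum, Ideal.Quotient.eq_zero_iff_mem, key] at hw
    by_contra hne
    obtain ⟨i, -, h⟩ := hw b (by
      have : (∑ x ∈ F, w x • AddMonoidAlgebra.single (x : T) (1 : ℂ)).coeff (b : T) = w b := by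
        simp [AddMonoidAlgebra.coeff_sum, Finsupp.single_apply, Subtype.coe_inj, hb]
      rwa [this])
    exact absurd h (not_le.mpr ((hP _).1 b.2 i))
  · rintro y -
    obtain ⟨x, rfl⟩ := Ideal.Quotient.mk_surjective y
    induction x using AddMonoidAlgebra.induction_linear with
    | zero => simp
    | add f g hf hg => rw [map_add]; exact Submodule.add_mem _ hf hg
    | single s r =>
      have hs : AddMonoidAlgebra.single s r = r • AddMonoidAlgebra.single s (1 : ℂ) := by simp
      rw [hs, ← hsm]
      refine Submodule.smul_mem _ _ ?_
      by_cases h : P s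
      · exact Submodule.subset_span ⟨⟨s, h⟩, rfl⟩
      · have : Ideal.Quotient.mk I (AddMonoidAlgebra.single s (1 : ℂ)) = 0 := by
          rw [Ideal.Quotient.eq_zero_iff_mem, key]
          intro t ht
          have : s = t := by
            by_contra hne
            simp [Finsupp.single_apply, hne] at ht
          subst this
          rw [hP] at h
          push Not at h
          simpa using h
        rw [this]
        exact Submodule.zero_mem _

end BoxAux

/-- Let `C ⊆ M_ℚ` (`M = ℤ^d`) be a full-dimensional simplicial cone
with (primitive) ray generators `m₁,…,m_d`, linearly independent over `ℚ`, and let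
`S = C ∩ M` be its semigroup of lattice points.  Then the quotient of `ℂ[C ∩ M]` by the
ideal generated by the monomials `[m₁],…,[m_d]` has the images of the monomials `[b]`,
`b ∈ Box(C)`, as a `ℂ`-basis, where `Box(C)` is the set of lattice points of `C` whose
coordinates in the basis `m₁,…,m_d` (over `ℚ`) all lie in `[0,1)`.  In particular the
`[m_i]` form a regular sequence in `ℂ[C ∩ M]`. -/
theorem box_basis_and_regular_sequence
    (d : ℕ) (mgen : Fin d → Fin d → ℤ)
    (hindep : LinearIndependent ℚ (fun i => fun k => (mgen i k : ℚ)))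
    (S : AddSubmonoid (Fin d → ℤ))
    (hS : ∀ m : Fin d → ℤ, m ∈ S ↔ ∃ a : Fin d → ℚ,
      (∀ i, 0 ≤ a i) ∧ ∀ k, (m k : ℚ) = ∑ i, a i * mgen i k)
    (hmem : ∀ i, mgen i ∈ S) :
    -- the images of the box monomials form a basis of the quotient:
    (LinearIndependent ℂ (fun b : { m : ↥S // ∃ a : Fin d → ℚ,
        (∀ i, 0 ≤ a i ∧ a i < 1) ∧ ∀ k, ((m : Fin d → ℤ) k : ℚ) = ∑ i, a i * mgen i k } =>
      Ideal.Quotient.mk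
        (Ideal.span (Set.range fun i : Fin d =>
          AddMonoidAlgebra.single (⟨mgen i, hmem i⟩ : ↥S) (1 : ℂ)))
        (AddMonoidAlgebra.single ((b : ↥S)) (1 : ℂ))) ∧
     ⊤ ≤ Submodule.span ℂ (Set.range fun b : { m : ↥S // ∃ a : Fin d → ℚ,
        (∀ i, 0 ≤ a i ∧ a i < 1) ∧ ∀ k, ((m : Fin d → ℤ) k : ℚ) = ∑ i, a i * mgen i k } =>
      Ideal.Quotient.mk
        (Ideal.span (Set.range fun i : Fin d =>
          AddMonoidAlgebra.single (⟨mgen i, hmem i⟩ : ↥S) (1 : ℂ)))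
        (AddMonoidAlgebra.single ((b : ↥S)) (1 : ℂ)))) ∧
    -- the monomials `[m_i]` form a regular sequence:
    RingTheory.Sequence.IsRegular (AddMonoidAlgebra ℂ ↥S)
      (List.ofFn fun i : Fin d =>
        (AddMonoidAlgebra.single (⟨mgen i, hmem i⟩ : ↥S) (1 : ℂ) :
          AddMonoidAlgebra ℂ ↥S)) := by
  have uniq : ∀ a b : Fin d → ℚ, (∀ k, ∑ i, a i * (mgen i k : ℚ) = ∑ i, b i * (mgen i k : ℚ)) →
      a = b := by
    intro a b h
    have := Fintype.linearIndependent_iff.1 hindep (fun i => a i - b i) (by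
      ext k
      simp [sub_mul, Finset.sum_sub_distrib, h k])
    ext i
    linarith [this i]
  have hex : ∀ s : ↥S, ∃ a : Fin d → ℚ, (∀ i, 0 ≤ a i) ∧
      ∀ k, ((s : Fin d → ℤ) k : ℚ) = ∑ i, a i * mgen i k := fun s => (hS s).1 s.2
  choose c h0 hc using hex
  have hadd : ∀ s t, c (s + t) = c s + c t := by
    intro s t
    apply uniq
    intro k
    rw [← hc]
    simp [add_mul, Finset.sum_add_distrib, ← hc]
  have hg : ∀ i, c ⟨mgen i, hmem i⟩ = Pi.single i 1 := by
    intro i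
    apply uniq
    intro k
    rw [← hc]
    simp [Pi.single_apply]
  have hdiv : ∀ s i, 1 ≤ c s i → ∃ t : ↥S, s = t + ⟨mgen i, hmem i⟩ := by
    intro s i h
    have hm : (s : Fin d → ℤ) - mgen i ∈ S := by
      rw [hS]
      refine ⟨c s - Pi.single i 1, ?_, ?_⟩
      · intro j
        by_cases hj : j = i
        · subst hj; simpa using h
        · simpa [hj] using h0 s j
      · intro k
        simp [sub_mul, Finset.sum_sub_distrib, ← hc, Pi.single_apply]
    exact ⟨⟨_, hm⟩, Subtype.ext (by simp)⟩
  refine ⟨BoxAux.basis (fun i => (⟨mgen i, hmem i⟩ : ↥S)) c hadd hg h0 hdiv _ ?_,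
    BoxAux.regular (fun i => (⟨mgen i, hmem i⟩ : ↥S)) c hadd hg h0 hdiv⟩
  intro s
  constructor
  · rintro ⟨a, ha, hk⟩ i
    have : c s = a := uniq _ _ fun k => by rw [← hc, hk]
    rw [this]
    exact (ha i).2
  · intro h
    exact ⟨c s, fun i => ⟨h0 s i, h i⟩, hc s⟩

end
end
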